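/- Strong normalisation for system F with modified bar recursion: every closed term typeable in extended system F w.r.t. the type assignment Δ for the constants of MBR is strongly normalising w.r.t. MBR, i.e. there is no infinite reduction sequence from such a term under β-reduction together with the rules of MBR (Gödel primitive recursion, the pattern-matching rules for if, <, lh, get, ++, and modified bar recursion). -/

import Mathlib

open scoped Classical

namespace SNPaper

/-! ### Untyped lambda terms with constructors and constants -/

inductive Tm (CO : Type) (arity : CO → ℕ) (C : Type) : Type where
  | var : ℕ → Tm CO arity C
  | con : (co : CO) → (Fin (arity co) → Tm CO arity C) → Tm CO arity C
  | cst : C → Tm CO arity C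
  | lam : ℕ → Tm CO arity C → Tm CO arity C
  | app : Tm CO arity C → Tm CO arity C → Tm CO arity C

variable {CO : Type} {arity : CO → ℕ} {C C' : Type}

/-- Free variables of a term. -/
def FV : Tm CO arity C → Finset ℕ
  | .var x => {x}
  | .con _ f => Finset.univ.biUnion fun i => FV (f i)
  | .cst _ => ∅
  | .lam y M => FV M \ {y}
  | .app M N => FV M ∪ FV N

/-- A variable fresh for the finite set `s`. -/
def freshVar (s : Finset ℕ) : ℕ := (s.sup id) + 1

/-- Capture-avoiding simultaneous substitution (bound variables are renamed
to fresh ones, avoiding capture). -/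
def subst : Tm CO arity C → (ℕ → Tm CO arity C) → Tm CO arity C
  | .var x, σ => σ x
  | .con co f, σ => .con co fun i => subst (f i) σ
  | .cst c, _ => .cst c
  | .app M N, σ => .app (subst M σ) (subst N σ)
  | .lam y M, σ =>
      let z := freshVar ((FV M \ {y}).biUnion fun x => FV (σ x))
      .lam z (subst M (Function.update σ y (.var z)))

/-- Capture-avoiding substitution `M[N/x]` of a single variable. -/
def subst1 (M : Tm CO arity C) (x : ℕ) (N : Tm CO arity C) : Tm CO arity C :=
  subst M fun y => if y = x then N else .var y

/-- `Mθ`: replace every constant `c` by `θ c`. -/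
def mapConst (θ : C → C') : Tm CO arity C → Tm CO arity C'
  | .var x => .var x
  | .con co f => .con co fun i => mapConst θ (f i)
  | .cst c => .cst (θ c)
  | .lam y M => .lam y (mapConst θ M)
  | .app M N => .app (mapConst θ M) (mapConst θ N)

/-- The set of constants occurring in a term. -/
def consts : Tm CO arity C → Set C
  | .var _ => ∅
  | .con _ f => ⋃ i, consts (f i)
  | .cst c => {c}
  | .lam _ M => consts M
  | .app M N => consts M ∪ consts N

/-- Iterated application `h M₁ … M_n`. -/
def appList (h : Tm CO arity C) (l : List (Tm CO arity C)) : Tm CO arity C :=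
  l.foldl .app h

/-- Iterated abstraction `λx₁…x_n. M`. -/
def lamList (xs : List ℕ) (M : Tm CO arity C) : Tm CO arity C :=
  xs.foldr .lam M

/-! ### Constructor patterns -/

inductive Pat (CO : Type) (arity : CO → ℕ) : Type where
  | pvar : ℕ → Pat CO arity
  | pcon : (co : CO) → (Fin (arity co) → Pat CO arity) → Pat CO arity

def Pat.toTm : Pat CO arity → Tm CO arity C
  | .pvar x => .var x
  | .pcon co qs => .con co fun i => (qs i).toTm

/-- Instantiate a pattern by a substitution (patterns contain no binders,
so this is plain structural substitution). -/
def Pat.substT (σ : ℕ → Tm CO arity C) : Pat CO arity → Tm CO arity C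
  | .pvar x => σ x
  | .pcon co qs => .con co fun i => (qs i).substT σ

def Pat.psubst (σ : ℕ → Pat CO arity) : Pat CO arity → Pat CO arity
  | .pvar x => σ x
  | .pcon co qs => .pcon co fun i => (qs i).psubst σ

/-- Number of occurrences of the variable `x` in a pattern. -/
def Pat.varCount (x : ℕ) : Pat CO arity → ℕ
  | .pvar y => if y = x then 1 else 0
  | .pcon _ qs => ∑ i, (qs i).varCount x

def Pat.vars : Pat CO arity → Finset ℕ
  | .pvar x => {x}
  | .pcon _ qs => Finset.univ.biUnion fun i => (qs i).vars

/-- The patterns in the list are linear and mutually variable disjoint: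
no variable occurs twice in the whole vector. -/
def PatsLinearDisjoint (Ps : List (Pat CO arity)) : Prop :=
  ∀ x : ℕ, (Ps.map (Pat.varCount x)).sum ≤ 1

/-- Two vectors of patterns are unifiable if they have a common instance. -/
def Unifiable (Ps Qs : List (Pat CO arity)) : Prop :=
  ∃ σ τ : ℕ → Pat CO arity, Ps.map (Pat.psubst σ) = Qs.map (Pat.psubst τ)

/-! ### Rewrite systems -/

/-- A rewrite rule `c P₁ … P_n ↦ R`. -/
structure Rule (CO : Type) (arity : CO → ℕ) (C : Type) where
  head : C
  pats : List (Pat CO arity)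
  rhs : Tm CO arity C

/-- The left hand side `c P₁ … P_n` of a rule, as a term. -/
def lhsTm (r : Rule CO arity C) : Tm CO arity C :=
  appList (.cst r.head) (r.pats.map Pat.toTm)

/-- Well-formedness of a rewrite system: patterns of each rule are linear and
mutually variable disjoint, free variables of the right hand side occur in the
left hand side, all rules for one constant have the same arity, and left hand
sides of different rules are non-unifiable. -/
structure WfRS (R : Set (Rule CO arity C)) : Prop where
  linear : ∀ r ∈ R, PatsLinearDisjoint r.pats
  fv_sub : ∀ r ∈ R, ∀ x ∈ FV r.rhs, ∃ P ∈ r.pats, x ∈ P.vars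
  arity_consistent : ∀ r ∈ R, ∀ r' ∈ R, r.head = r'.head → r.pats.length = r'.pats.length
  non_unifiable : ∀ r ∈ R, ∀ r' ∈ R, r.head = r'.head → r ≠ r' →
    ¬ Unifiable r.pats r'.pats

/-- One-step reduction `M →_R N`: contraction of a β-redex or of an instance of
a rewrite rule, in an arbitrary subterm position. -/
inductive Step (R : Set (Rule CO arity C)) : Tm CO arity C → Tm CO arity C → Prop where
  | beta (x : ℕ) (M N : Tm CO arity C) :
      Step R (.app (.lam x M) N) (subst1 M x N)
  | rule (r : Rule CO arity C) (hr : r ∈ R) (σ : ℕ → Tm CO arity C) :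
      Step R (appList (.cst r.head) (r.pats.map (Pat.substT σ))) (subst r.rhs σ)
  | appL {M M' N : Tm CO arity C} : Step R M M' → Step R (.app M N) (.app M' N)
  | appR {M N N' : Tm CO arity C} : Step R N N' → Step R (.app M N) (.app M N')
  | lamC {M M' : Tm CO arity C} (x : ℕ) : Step R M M' → Step R (.lam x M) (.lam x M')
  | conC {co : CO} {f : Fin (arity co) → Tm CO arity C} (i : Fin (arity co))
      {M' : Tm CO arity C} : Step R (f i) M' →
      Step R (.con co f) (.con co (Function.update f i M'))

/-- Strong normalisation: every reduction sequence from `M` terminates,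
expressed via accessibility (the inductive characterisation). -/
def SN (R : Set (Rule CO arity C)) (M : Tm CO arity C) : Prop :=
  Acc (fun N M => Step R M N) M

/-- A constant is stratified w.r.t. `R` if all right hand sides of its rules
contain only stratified constants. -/
inductive Stratified (R : Set (Rule CO arity C)) : C → Prop where
  | intro (c : C) :
      (∀ r ∈ R, r.head = c → ∀ c' ∈ consts r.rhs, Stratified R c') →
      Stratified R c

/-! ### Stratified approximations -/

/-- `M_n`: replace every constant `c` of `M` by its `n`-th variant `c_n`
(we realize `C_ω` as `C × ℕ`). -/
def stratTm (n : ℕ) (M : Tm CO arity C) : Tm CO arity (C × ℕ) :=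
  mapConst (fun c => (c, n)) M

/-- The stratified rewrite system `R_ω = {c_{n+1} P⃗ ↦ R_n | c P⃗ ↦ R ∈ R}`. -/
def Romega (R : Set (Rule CO arity C)) : Set (Rule CO arity (C × ℕ)) :=
  {r' | ∃ r ∈ R, ∃ n : ℕ, r' = ⟨(r.head, n + 1), r.pats, stratTm n r.rhs⟩}

/-! ### The strict domain-theoretic model -/

open OmegaCompletePartialOrder in
/-- A model of the recursive domain equation
`D = Σ_{co} D^{arity co} + (D → D)` : a Scott domain (here: an ω-cpo with
least element) together with continuous operations `abst`, `ap`, `con`,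
projections and `case`, satisfying the usual equations. -/
structure DomModel (CO : Type) (arity : CO → ℕ) (D : Type)
    [OmegaCompletePartialOrder D] [OrderBot D] : Type where
  abst : (D → D) → D
  ap : D → D → D
  con : (co : CO) → (Fin (arity co) → D) → D
  proj : (co : CO) → Fin (arity co) → D → D
  case : D → Option (CO ⊕ Unit)
  case_con : ∀ co as, case (con co as) = some (Sum.inl co)
  case_abst : ∀ f, case (abst f) = some (Sum.inr ())
  case_bot : case ⊥ = none
  proj_con : ∀ co as i, proj co i (con co as) = as i
  ap_abst : ∀ f b, ap (abst f) b = f b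
  abst_cont : ωScottContinuous abst
  ap_cont : ωScottContinuous fun p : D × D => ap p.1 p.2
  con_cont : ∀ co, ωScottContinuous (con co)
  proj_cont : ∀ co i, ωScottContinuous (proj co i)

variable {D : Type} [OmegaCompletePartialOrder D] [OrderBot D]

/-- Strict version of `abst`. -/
noncomputable def strAbst (Dm : DomModel CO arity D) (f : D → D) : D :=
  if f = fun _ => (⊥ : D) then ⊥ else Dm.abst f

/-- Strict version of `ap`. -/
noncomputable def strAp (Dm : DomModel CO arity D) (a b : D) : D :=
  if a = ⊥ ∨ b = ⊥ then ⊥ else Dm.ap a b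

/-- Strict version of a constructor. -/
noncomputable def strCon (Dm : DomModel CO arity D) (co : CO)
    (as : Fin (arity co) → D) : D :=
  if ∃ i, as i = ⊥ then ⊥ else Dm.con co as

/-- The strict denotational semantics `⟦M⟧_α η`. -/
noncomputable def sem (Dm : DomModel CO arity D) :
    Tm CO arity C → (C → D) → (ℕ → D) → D
  | .var x, _, η => η x
  | .cst c, α, _ => α c
  | .con co f, α, η => strCon Dm co fun i => sem Dm (f i) α η
  | .lam y M, α, η => strAbst Dm fun a => sem Dm M α (Function.update η y a)
  | .app M N, α, η => strAp Dm (sem Dm M α η) (sem Dm N α η)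

/-! ### The pattern inverse `P⃗⁻¹` -/

/-- Combine the results of matching the components of a pattern vector,
left to right: the leftmost non-successful result wins; on success the
(variable-disjoint) partial environments are merged. -/
noncomputable def combineList :
    List (Option (Option (ℕ → Option D))) → Option (Option (ℕ → Option D))
  | [] => some (some fun _ => none)
  | r :: rs =>
    match r with
    | some (some η) =>
      match combineList rs with
      | some (some η') => some (some fun x => (η x).orElse fun _ => η' x)
      | other => other
    | bad => bad

/-- Match a single pattern against a domain element, producing `⊥` (`none`),
`Nothing` (`some none`) or `Just` a partial environment. -/
noncomputable def pmatch (Dm : DomModel CO arity D) :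
    Pat CO arity → D → Option (Option (ℕ → Option D))
  | .pvar x, a => some (some fun y => if y = x then some a else none)
  | .pcon co qs, b =>
    match Dm.case b with
    | none => none
    | some (Sum.inr _) => some none
    | some (Sum.inl co') =>
      if h : co' = co then
        combineList (List.ofFn fun i => pmatch Dm (qs i) (Dm.proj co i b))
      else some none

/-- The inverse `P⃗⁻¹ : D^k → Maybe (D^Var)` of a vector of mutually variable
disjoint constructor patterns (`none` = ⊥, `some none` = Nothing,
`some (some η)` = Just η, where `η` is `⊥` outside the pattern variables). -/
noncomputable def pinv (Dm : DomModel CO arity D) (Ps : List (Pat CO arity))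
    (as : List D) : Option (Option (ℕ → D)) :=
  (combineList (List.zipWith (pmatch Dm) Ps as)).map
    (Option.map fun η x => (η x).getD ⊥)

/-! ### The constant assignment `α_R` -/

/-- The arity (number of argument patterns) of a constant in `R`. -/
noncomputable def carity (R : Set (Rule CO arity C)) (c : C) : ℕ :=
  if h : ∃ r, r ∈ R ∧ r.head = c then h.choose.pats.length else 0

/-- `abstN k f` is `abst(λa₁. abst(λa₂. … abst(λa_k. f [a₁,…,a_k])…))`. -/
noncomputable def abstN (Dm : DomModel CO arity D) : ℕ → (List D → D) → D
  | 0, f => f []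
  | k + 1, f => Dm.abst fun a => abstN Dm k fun as => f (a :: as)

/-- The value of constant `c` on arguments `as`, by pattern matching on the
rules of `R`: the matching rule's right hand side if one matches, `dummy` on
definite mismatch of all rules, and `⊥` otherwise. -/
noncomputable def ruleVal (Dm : DomModel CO arity D) (R : Set (Rule CO arity C))
    (dummy : D) (α : C → D) (c : C) (as : List D) : D :=
  if h : ∃ r, r ∈ R ∧ r.head = c ∧ ∃ η : ℕ → D, pinv Dm r.pats as = some (some η) then
    sem Dm h.choose.rhs α h.choose_spec.2.2.choose
  else if ∀ r ∈ R, r.head = c → pinv Dm r.pats as = some none then dummy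
  else ⊥

/-- The operator `Γ_R` on constant assignments whose least fixed point is `α_R`. -/
noncomputable def Gamma (Dm : DomModel CO arity D) (R : Set (Rule CO arity C))
    (dummy : D) (α : C → D) : C → D :=
  fun c =>
    if ∃ r, r ∈ R ∧ r.head = c then
      abstN Dm (carity R c) (ruleVal Dm R dummy α c)
    else ⊥

/-- `a` is the least fixed point of `f`. -/
def IsLeastFixedPoint {α : Type*} [Preorder α] (f : α → α) (a : α) : Prop :=
  f a = a ∧ ∀ b, f b = b → a ≤ b

end SNPaper
namespace SNPaper

/-! ### Extended system F -/

/-- The constructors `T, F, 0, S, nil, cons`. -/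
inductive FCO : Type where
  | tt | ff | zero | succ | nil | cons
  deriving DecidableEq

/-- Their arities. -/
def fArity : FCO → ℕ
  | .tt => 0
  | .ff => 0
  | .zero => 0
  | .succ => 1
  | .nil => 0
  | .cons => 2

/-- Types of extended system F: type variables, `boole`, `nat`, lists `ρ*`,
arrow types and `∀p.ρ`. -/
inductive FTy : Type where
  | tvar : ℕ → FTy
  | boole : FTy
  | nat : FTy
  | list : FTy → FTy
  | arr : FTy → FTy → FTy
  | all : ℕ → FTy → FTy

/-- Free type variables. -/
def ftv : FTy → Finset ℕ
  | .tvar p => {p}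
  | .boole => ∅
  | .nat => ∅
  | .list ρ => ftv ρ
  | .arr ρ σ => ftv ρ ∪ ftv σ
  | .all p ρ => ftv ρ \ {p}

/-- A type is closed if it has no free type variables. -/
def FTy.Closed (ρ : FTy) : Prop := ftv ρ = ∅

/-- Capture-avoiding simultaneous substitution on types. -/
def tsubst : FTy → (ℕ → FTy) → FTy
  | .tvar p, σ => σ p
  | .boole, _ => .boole
  | .nat, _ => .nat
  | .list ρ, σ => .list (tsubst ρ σ)
  | .arr ρ τ, σ => .arr (tsubst ρ σ) (tsubst τ σ)
  | .all p ρ, σ =>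
      let z := freshVar ((ftv ρ \ {p}).biUnion fun q => ftv (σ q))
      .all z (tsubst ρ (Function.update σ p (.tvar z)))

/-- Capture-avoiding substitution `ρ[τ/p]` of a single type variable. -/
def tsubst1 (ρ : FTy) (p : ℕ) (τ : FTy) : FTy :=
  tsubst ρ fun q => if q = p then τ else .tvar q

section FTerms

variable {C : Type}

/-- The constructor terms. -/
def tmT : Tm FCO fArity C := .con .tt ![]
def tmF : Tm FCO fArity C := .con .ff ![]
def tmZero : Tm FCO fArity C := .con .zero ![]
def tmSucc (M : Tm FCO fArity C) : Tm FCO fArity C := .con .succ ![M]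
def tmNil : Tm FCO fArity C := .con .nil ![]
def tmCons (M N : Tm FCO fArity C) : Tm FCO fArity C := .con .cons ![M, N]

end FTerms

/-- Object variable contexts. -/
def Ctx : Type := ℕ → Option FTy

/-- The empty context. -/
def emptyCtx : Ctx := fun _ => none

/-- The typing judgements `Δ, Γ ⊢_C M : ρ` of extended system F
(Curry style, with the constructor rules). -/
inductive FTyd {C : Type} (Δ : C → FTy) : Ctx → Tm FCO fArity C → FTy → Prop where
  | var {Γ : Ctx} {x : ℕ} {ρ : FTy} : Γ x = some ρ → FTyd Δ Γ (.var x) ρ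
  | cst {Γ : Ctx} (c : C) : FTyd Δ Γ (.cst c) (Δ c)
  | lam {Γ : Ctx} {x : ℕ} {M : Tm FCO fArity C} {ρ σ : FTy} :
      FTyd Δ (fun y => if y = x then some ρ else Γ y) M σ →
      FTyd Δ Γ (.lam x M) (.arr ρ σ)
  | app {Γ : Ctx} {M N : Tm FCO fArity C} {ρ σ : FTy} :
      FTyd Δ Γ M (.arr ρ σ) → FTyd Δ Γ N ρ → FTyd Δ Γ (.app M N) σ
  | allI {Γ : Ctx} {M : Tm FCO fArity C} {ρ : FTy} {p : ℕ} :
      FTyd Δ Γ M ρ → (∀ x σ, Γ x = some σ → p ∉ ftv σ) →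
      FTyd Δ Γ M (.all p ρ)
  | allE {Γ : Ctx} {M : Tm FCO fArity C} {ρ : FTy} {p : ℕ} (σ : FTy) :
      FTyd Δ Γ M (.all p ρ) → FTyd Δ Γ M (tsubst1 ρ p σ)
  | tt {Γ : Ctx} : FTyd Δ Γ tmT .boole
  | ff {Γ : Ctx} : FTyd Δ Γ tmF .boole
  | zero {Γ : Ctx} : FTyd Δ Γ tmZero .nat
  | succ {Γ : Ctx} {M : Tm FCO fArity C} : FTyd Δ Γ M .nat → FTyd Δ Γ (tmSucc M) .nat
  | nil {Γ : Ctx} {ρ : FTy} : FTyd Δ Γ tmNil (.list ρ)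
  | cons {Γ : Ctx} {M N : Tm FCO fArity C} {ρ : FTy} :
      FTyd Δ Γ M ρ → FTyd Δ Γ N (.list ρ) → FTyd Δ Γ (tmCons M N) (.list ρ)

/-- Type-soundness of a rewrite system w.r.t. the type system `(T₀, ⊢_F)`:
for every rule `L ↦ R` with `FV L = x⃗` and every closed type `ρ`,
`Δ ⊢_F λx⃗.L : ρ` implies `Δ ⊢_F λx⃗.R : ρ`. -/
def FTypeSound {C : Type} (R : Set (Rule FCO fArity C)) (Δ : C → FTy) : Prop :=
  ∀ r ∈ R, ∀ xs : List ℕ, xs.Nodup → xs.toFinset = FV (lhsTm r) →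
    ∀ ρ : FTy, ρ.Closed →
      FTyd Δ emptyCtx (lamList xs (lhsTm r)) ρ →
      FTyd Δ emptyCtx (lamList xs r.rhs) ρ

/-! ### The candidate semantics of types -/

section FSem

variable {D : Type} [OmegaCompletePartialOrder D] [OrderBot D]

/-- Denotations of the constructors. -/
def dT (Dm : DomModel FCO fArity D) : D := Dm.con .tt ![]
def dF (Dm : DomModel FCO fArity D) : D := Dm.con .ff ![]
def dZero (Dm : DomModel FCO fArity D) : D := Dm.con .zero ![]
def dSucc (Dm : DomModel FCO fArity D) (a : D) : D := Dm.con .succ ![a]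
def dNil (Dm : DomModel FCO fArity D) : D := Dm.con .nil ![]
def dCons (Dm : DomModel FCO fArity D) (a d : D) : D := Dm.con .cons ![a, d]

/-- `Ñ`: the least subset of `D` containing `{0} ∪ abst(D)` and closed
under the constructor `S`. -/
inductive NSet (Dm : DomModel FCO fArity D) : D → Prop where
  | zero : NSet Dm (dZero Dm)
  | ab (f : D → D) : NSet Dm (Dm.abst f)
  | succ {d : D} : NSet Dm d → NSet Dm (dSucc Dm d)

/-- `L(A)`: the least subset of `D` containing `{nil} ∪ abst(D)` and
containing `cons(a,d)` for `a ∈ A` and `d ∈ L(A)`. -/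
inductive LSet (Dm : DomModel FCO fArity D) (A : Set D) : D → Prop where
  | nil : LSet Dm A (dNil Dm)
  | ab (f : D → D) : LSet Dm A (Dm.abst f)
  | cons {a d : D} : a ∈ A → LSet Dm A d → LSet Dm A (dCons Dm a d)

/-- `B̃ = {T, F} ∪ abst(D)`. -/
def BSet (Dm : DomModel FCO fArity D) : Set D :=
  {dT Dm, dF Dm} ∪ Set.range Dm.abst

/-- `A → B = { abst f | ∀ a ∈ A, f a ∈ B }`. -/
def arrSet (Dm : DomModel FCO fArity D) (A B : Set D) : Set D :=
  {x | ∃ f : D → D, x = Dm.abst f ∧ ∀ a ∈ A, f a ∈ B}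

/-- The candidates: subsets of `D` containing `dummy` and avoiding `⊥`. -/
def Cand (dummy : D) : Set (Set D) :=
  {A : Set D | dummy ∈ A ∧ (⊥ : D) ∉ A}

/-- The candidate semantics `⟦ρ⟧_τ` of types. -/
def tySem (Dm : DomModel FCO fArity D) (dummy : D) : FTy → (ℕ → Set D) → Set D
  | .tvar p, τ => τ p
  | .boole, _ => BSet Dm
  | .nat, _ => {d | NSet Dm d}
  | .list ρ, τ => {d | LSet Dm (tySem Dm dummy ρ τ) d}
  | .arr ρ σ, τ => arrSet Dm (tySem Dm dummy ρ τ) (tySem Dm dummy σ τ)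
  | .all p ρ, τ => ⋂ A ∈ Cand dummy, tySem Dm dummy ρ (Function.update τ p A)

end FSem

/-! ### The rewrite system MBR -/

/-- The constants of MBR: `if`, `<`, `lh`, `get`, `++` (cat), Gödel primitive
recursion `rec`, and the modified bar recursion constants `Φ` (phi) and
`Ψ` (psi). -/
inductive MC : Type where
  | cif | clt | clh | cget | cat | crec | cphi | cpsi
  deriving DecidableEq

/-- Pattern abbreviations. -/
def pT : Pat FCO fArity := .pcon .tt ![]
def pF : Pat FCO fArity := .pcon .ff ![]
def pZero : Pat FCO fArity := .pcon .zero ![]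
def pSucc (P : Pat FCO fArity) : Pat FCO fArity := .pcon .succ ![P]
def pNil : Pat FCO fArity := .pcon .nil ![]
def pCons (P Q : Pat FCO fArity) : Pat FCO fArity := .pcon .cons ![P, Q]

def app2 {C : Type} (h M N : Tm FCO fArity C) : Tm FCO fArity C :=
  .app (.app h M) N
def app3 {C : Type} (h M N K : Tm FCO fArity C) : Tm FCO fArity C :=
  .app (app2 h M N) K

/-- The rules of MBR.  Variables: in the `Φ`/`Ψ` rules, `0,1,2,3,4` stand for
`y, g, s, k, x` respectively. -/
def mbrList : List (Rule FCO fArity MC) :=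
  [ -- if T x y ↦ x ; if F x y ↦ y
    ⟨.cif, [pT, .pvar 0, .pvar 1], .var 0⟩,
    ⟨.cif, [pF, .pvar 0, .pvar 1], .var 1⟩,
    -- n < 0 ↦ F ; 0 < S m ↦ T ; S n < S m ↦ n < m
    ⟨.clt, [.pvar 0, pZero], tmF⟩,
    ⟨.clt, [pZero, pSucc (.pvar 0)], tmT⟩,
    ⟨.clt, [pSucc (.pvar 0), pSucc (.pvar 1)], app2 (.cst .clt) (.var 0) (.var 1)⟩,
    -- lh nil ↦ 0 ; lh (cons x s) ↦ S (lh s)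
    ⟨.clh, [pNil], tmZero⟩,
    ⟨.clh, [pCons (.pvar 0) (.pvar 1)], tmSucc (.app (.cst .clh) (.var 1))⟩,
    -- get (cons x s) 0 ↦ x ; get (cons x s) (S n) ↦ get s n
    ⟨.cget, [pCons (.pvar 0) (.pvar 1), pZero], .var 0⟩,
    ⟨.cget, [pCons (.pvar 0) (.pvar 1), pSucc (.pvar 2)],
      app2 (.cst .cget) (.var 1) (.var 2)⟩,
    -- nil ++ t ↦ t ; cons x s ++ t ↦ cons x (s ++ t)
    ⟨.cat, [pNil, .pvar 0], .var 0⟩,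
    ⟨.cat, [pCons (.pvar 0) (.pvar 1), .pvar 2],
      tmCons (.var 0) (app2 (.cst .cat) (.var 1) (.var 2))⟩,
    -- rec x f 0 ↦ x ; rec x f (S n) ↦ f n (rec x f n)   (Gödel primitive recursion)
    ⟨.crec, [.pvar 0, .pvar 1, pZero], .var 0⟩,
    ⟨.crec, [.pvar 0, .pvar 1, pSucc (.pvar 2)],
      app2 (.var 1) (.var 2) (app3 (.cst .crec) (.var 0) (.var 1) (.var 2))⟩,
    -- Φ y g s ↦ y (λk. Ψ y g s k (k < lh s))
    ⟨.cphi, [.pvar 0, .pvar 1, .pvar 2],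
      .app (.var 0) (.lam 3 (app2 (app3 (.cst .cpsi) (.var 0) (.var 1) (.var 2))
        (.var 3) (app2 (.cst .clt) (.var 3) (.app (.cst .clh) (.var 2)))))⟩,
    -- Ψ y g s k T ↦ get s k
    ⟨.cpsi, [.pvar 0, .pvar 1, .pvar 2, .pvar 3, pT],
      app2 (.cst .cget) (.var 2) (.var 3)⟩,
    -- Ψ y g s k F ↦ g k (λx. Φ y g (s ++ cons(x, nil)))
    ⟨.cpsi, [.pvar 0, .pvar 1, .pvar 2, .pvar 3, pF],
      app2 (.var 1) (.var 3)
        (.lam 4 (app3 (.cst .cphi) (.var 0) (.var 1)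
          (app2 (.cst .cat) (.var 2) (tmCons (.var 4) tmNil))))⟩ ]

/-- The rewrite system MBR (as a set of rules). -/
def MBR : Set (Rule FCO fArity MC) := {r | r ∈ mbrList}

/-- The type assignment `Δ` for the constants of MBR. -/
def ΔMBR : MC → FTy
  | .cif => .all 0 (.arr .boole (.arr (.tvar 0) (.arr (.tvar 0) (.tvar 0))))
  | .clt => .arr .nat (.arr .nat .boole)
  | .clh => .all 0 (.arr (.list (.tvar 0)) .nat)
  | .cget => .all 0 (.arr (.list (.tvar 0)) (.arr .nat (.tvar 0)))
  | .cat => .all 0 (.arr (.list (.tvar 0)) (.arr (.list (.tvar 0)) (.list (.tvar 0))))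
  | .crec => .all 0 (.arr (.tvar 0)
      (.arr (.arr .nat (.arr (.tvar 0) (.tvar 0))) (.arr .nat (.tvar 0))))
  | .cphi => .all 0 (.arr (.arr (.arr .nat (.tvar 0)) .nat)
      (.arr (.arr .nat (.arr (.arr (.tvar 0) .nat) (.tvar 0)))
        (.arr (.list (.tvar 0)) .nat)))
  | .cpsi => .all 0 (.arr (.arr (.arr .nat (.tvar 0)) .nat)
      (.arr (.arr .nat (.arr (.arr (.tvar 0) .nat) (.tvar 0)))
        (.arr (.list (.tvar 0)) (.arr .nat (.arr .boole (.tvar 0))))))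

end SNPaper

/-!
Termination is read off from nonemptiness in a filter model. Its elements are sets of intersection
types, the denotation of a term is the set of its types, and by a reducibility argument every term
that has a type is strongly normalising; since there is no empty intersection, arguments must be
typed, so normalisation also holds for the parts of a term that are erased by reduction. A constant
has a type if all its rules whose patterns do not clash with the types of the arguments yield that
type, so the rewrite rules become inclusions between denotations. A further type `star` contains the
terms that stay stuck, such as `get nil n`.

A type of system F is interpreted by a candidate: a set of nonempty denotations that is closed
upwards and contains everything that has the type `star`. Once each constant lies in the candidate
of its type, so does every typable term, which is therefore strongly normalising. For `Φ` this is
bar induction. If `Φ y g s` were not a numeral, `s` could be extended step by step to an infinite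
sequence all of whose initial segments are bad. But `y` applied to the limit is a numeral, and by
continuity of application it already is one at the argument given by some initial segment.
-/

namespace SNPaper

/-! ### Reduction on de Bruijn terms -/

section Reduction

variable {CO : Type} {arity : CO → ℕ} {C : Type}

/-- Lambda terms with constructors and constants in de Bruijn notation. Reductions of named terms
are simulated by reductions of these terms, where no renaming of bound variables is needed. -/
inductive DeBruijn (CO : Type) (arity : CO → ℕ) (C : Type) : Type where
  | var : ℕ → DeBruijn CO arity C
  | con : (co : CO) → (Fin (arity co) → DeBruijn CO arity C) → DeBruijn CO arity C
  | cst : C → DeBruijn CO arity C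
  | lam : DeBruijn CO arity C → DeBruijn CO arity C
  | app : DeBruijn CO arity C → DeBruijn CO arity C → DeBruijn CO arity C

namespace DeBruijn

/-- Renaming of the free indices. -/
def rename : DeBruijn CO arity C → (ℕ → ℕ) → DeBruijn CO arity C
  | var n, ξ => var (ξ n)
  | con co f, ξ => con co fun i => (f i).rename ξ
  | cst c, _ => cst c
  | lam M, ξ => lam (M.rename fun n => n.casesOn 0 fun m => ξ m + 1)
  | app M N, ξ => app (M.rename ξ) (N.rename ξ)

/-- The substitution `0 ↦ N`, `n + 1 ↦ s n`. -/
def push (N : DeBruijn CO arity C) (s : ℕ → DeBruijn CO arity C) : ℕ → DeBruijn CO arity C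
  | 0 => N
  | n + 1 => s n

/-- The substitution `s` moved under a binder. -/
def up (s : ℕ → DeBruijn CO arity C) : ℕ → DeBruijn CO arity C :=
  push (var 0) fun n => (s n).rename Nat.succ

/-- Simultaneous substitution. -/
def bind : DeBruijn CO arity C → (ℕ → DeBruijn CO arity C) → DeBruijn CO arity C
  | var n, s => s n
  | con co f, s => con co fun i => (f i).bind s
  | cst c, _ => cst c
  | lam M, s => lam (M.bind (up s))
  | app M N, s => app (M.bind s) (N.bind s)

theorem rename_eq_bind (M : DeBruijn CO arity C) (ξ : ℕ → ℕ) :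
    M.rename ξ = M.bind fun n => var (ξ n) := by
  induction M generalizing ξ with
  | lam M ih =>
    simp only [rename, bind, ih, lam.injEq]
    congr 1; funext n; cases n <;> rfl
  | _ => simp_all [rename, bind]

theorem bind_var (M : DeBruijn CO arity C) : M.bind var = M := by
  induction M with
  | lam M ih =>
    have : up var = (var : ℕ → DeBruijn CO arity C) := by funext n; cases n <;> rfl
    simp only [bind, this, ih]
  | _ => simp_all [bind]

theorem rename_bind (M : DeBruijn CO arity C) (ξ : ℕ → ℕ) (s : ℕ → DeBruijn CO arity C) :
    (M.rename ξ).bind s = M.bind fun n => s (ξ n) := by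
  induction M generalizing ξ s with
  | lam M ih =>
    simp only [rename, bind, ih, lam.injEq]
    congr 1; funext n; cases n <;> rfl
  | _ => simp_all [rename, bind]

theorem rename_rename (M : DeBruijn CO arity C) (ξ ζ : ℕ → ℕ) :
    (M.rename ξ).rename ζ = M.rename fun n => ζ (ξ n) := by
  rw [rename_eq_bind _ ζ, rename_bind, rename_eq_bind]

theorem bind_rename (M : DeBruijn CO arity C) (s : ℕ → DeBruijn CO arity C) (ξ : ℕ → ℕ) :
    (M.bind s).rename ξ = M.bind fun n => (s n).rename ξ := by
  induction M generalizing ξ s with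
  | lam M ih =>
    simp only [rename, bind, ih, lam.injEq]
    congr 1; funext n
    cases n with
    | zero => rfl
    | succ n => simp only [up, push, rename_rename]
  | _ => simp_all [rename, bind]

theorem bind_bind (M : DeBruijn CO arity C) (s t : ℕ → DeBruijn CO arity C) :
    (M.bind s).bind t = M.bind fun n => (s n).bind t := by
  induction M generalizing s t with
  | lam M ih =>
    simp only [bind, ih, lam.injEq]
    congr 1; funext n
    cases n with
    | zero => rfl
    | succ n => simp only [up, push, rename_bind, bind_rename]
  | _ => simp_all [bind]

theorem up_bind_push (s : ℕ → DeBruijn CO arity C) (N : DeBruijn CO arity C) :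
    (fun n => (up s n).bind (push N var)) = push N s := by
  funext n
  cases n with
  | zero => rfl
  | succ n => exact (rename_bind _ _ _).trans (bind_var _)

end DeBruijn

open DeBruijn

/-- The de Bruijn form of a named term, its free variables being replaced according to `s`. -/
def Tm.deBruijn : Tm CO arity C → (ℕ → DeBruijn CO arity C) → DeBruijn CO arity C
  | .var x, s => s x
  | .con co f, s => .con co fun i => (f i).deBruijn s
  | .cst c, _ => .cst c
  | .lam y M, s => .lam (M.deBruijn (Function.update (fun x => (s x).rename Nat.succ) y (.var 0)))
  | .app M N, s => .app (M.deBruijn s) (N.deBruijn s)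

theorem Tm.deBruijn_bind (M : Tm CO arity C) (s t : ℕ → DeBruijn CO arity C) :
    (M.deBruijn s).bind t = M.deBruijn fun x => (s x).bind t := by
  induction M generalizing s t with
  | lam y M ih =>
    simp only [deBruijn, DeBruijn.bind, ih, DeBruijn.lam.injEq]
    congr 1; funext x
    rcases eq_or_ne x y with rfl | hx
    · simp [DeBruijn.bind, up, push]
    · simp only [Function.update_of_ne hx, rename_bind, bind_rename, up, push]
  | _ => simp_all [deBruijn, DeBruijn.bind]

theorem Tm.deBruijn_rename (M : Tm CO arity C) (s : ℕ → DeBruijn CO arity C) (ξ : ℕ → ℕ) :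
    (M.deBruijn s).rename ξ = M.deBruijn fun x => (s x).rename ξ := by
  simp only [rename_eq_bind, Tm.deBruijn_bind]

theorem Tm.deBruijn_congr {M : Tm CO arity C} {s t : ℕ → DeBruijn CO arity C}
    (h : ∀ x ∈ FV M, s x = t x) : M.deBruijn s = M.deBruijn t := by
  induction M generalizing s t with
  | var x => exact h x (by simp [FV])
  | con co f ih =>
    simp only [deBruijn]
    congr 1; funext i
    exact ih i fun x hx => h x (by simpa [FV] using ⟨i, hx⟩)
  | cst c => rfl
  | lam y M ih =>
    simp only [deBruijn]
    congr 1
    refine ih fun x hx => ?_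
    rcases eq_or_ne x y with rfl | hxy
    · simp
    · simp [Function.update_of_ne hxy, h x (by simp [FV, hx, hxy])]
  | app M N ihM ihN =>
    simp only [deBruijn, ihM fun x hx => h x (by simp [FV, hx]),
      ihN fun x hx => h x (by simp [FV, hx])]

theorem freshVar_notMem (s : Finset ℕ) : freshVar s ∉ s :=
  fun h => Nat.not_succ_le_self _ (Finset.le_sup (f := id) h)

theorem Tm.deBruijn_subst (M : Tm CO arity C) (σ : ℕ → Tm CO arity C)
    (s : ℕ → DeBruijn CO arity C) :
    (subst M σ).deBruijn s = M.deBruijn fun x => (σ x).deBruijn s := by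
  induction M generalizing σ s with
  | lam y M ih =>
    simp only [subst, deBruijn, ih, DeBruijn.lam.injEq]
    refine deBruijn_congr fun x hx => ?_
    rcases eq_or_ne x y with rfl | hxy
    · simp [deBruijn]
    · simp only [Function.update_of_ne hxy, deBruijn_rename]
      refine deBruijn_congr fun w hw => Function.update_of_ne ?_ _ _
      rintro rfl
      exact freshVar_notMem _ (Finset.mem_biUnion.2 ⟨x, by simp [hx, hxy], hw⟩)
  | _ => simp_all [subst, deBruijn]

theorem Pat.deBruijn_substT (P : Pat CO arity) (σ : ℕ → Tm CO arity C)
    (s : ℕ → DeBruijn CO arity C) :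
    (P.substT σ).deBruijn s = P.toTm.deBruijn fun x => (σ x).deBruijn s := by
  induction P with
  | pvar x => rfl
  | pcon co qs ih => simp only [substT, toTm, Tm.deBruijn, ih]

/-- Iterated application. -/
def DeBruijn.apps (M : DeBruijn CO arity C) (l : List (DeBruijn CO arity C)) :
    DeBruijn CO arity C :=
  l.foldl .app M

theorem DeBruijn.apps_append_singleton (M : DeBruijn CO arity C) (l : List (DeBruijn CO arity C))
    (N : DeBruijn CO arity C) : M.apps (l ++ [N]) = .app (M.apps l) N := by
  simp [apps]

theorem Tm.deBruijn_appList (M : Tm CO arity C) (l : List (Tm CO arity C))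
    (s : ℕ → DeBruijn CO arity C) :
    (appList M l).deBruijn s = (M.deBruijn s).apps (l.map fun N => N.deBruijn s) := by
  induction l generalizing M with
  | nil => rfl
  | cons N _ ih => exact ih (.app M N)

/-- One-step reduction of de Bruijn terms. -/
inductive Red (R : Set (Rule CO arity C)) : DeBruijn CO arity C → DeBruijn CO arity C → Prop where
  | beta (B N : DeBruijn CO arity C) : Red R (.app (.lam B) N) (B.bind (push N .var))
  | rule {r : Rule CO arity C} (hr : r ∈ R) (s : ℕ → DeBruijn CO arity C) :
      Red R ((lhsTm r).deBruijn s) (r.rhs.deBruijn s)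
  | appL {M M' : DeBruijn CO arity C} (N : DeBruijn CO arity C) :
      Red R M M' → Red R (.app M N) (.app M' N)
  | appR (M : DeBruijn CO arity C) {N N' : DeBruijn CO arity C} :
      Red R N N' → Red R (.app M N) (.app M N')
  | lam {B B' : DeBruijn CO arity C} : Red R B B' → Red R (.lam B) (.lam B')
  | con {co : CO} (f : Fin (arity co) → DeBruijn CO arity C) (i : Fin (arity co))
      {N : DeBruijn CO arity C} :
      Red R (f i) N → Red R (.con co f) (.con co (Function.update f i N))

variable {R : Set (Rule CO arity C)}

theorem Red.bind {M M' : DeBruijn CO arity C} (h : Red R M M') (s : ℕ → DeBruijn CO arity C) :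
    Red R (M.bind s) (M'.bind s) := by
  induction h generalizing s with
  | beta B N =>
    have : (B.bind (push N .var)).bind s = (B.bind (up s)).bind (push (N.bind s) .var) := by
      rw [bind_bind, bind_bind, up_bind_push]
      congr 1; funext n; cases n <;> rfl
    rw [this]
    exact .beta _ _
  | rule hr t =>
    rw [Tm.deBruijn_bind, Tm.deBruijn_bind]
    exact .rule hr _
  | appL N _ ih => exact .appL _ (ih s)
  | appR M _ ih => exact .appR _ (ih s)
  | lam _ ih => exact .lam (ih _)
  | con f i _ ih =>
    simp only [DeBruijn.bind, Function.apply_update (fun _ M => DeBruijn.bind M s)]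
    exact .con (fun j => (f j).bind s) i (ih s)

theorem Step.red {M M' : Tm CO arity C} (h : Step R M M') (s : ℕ → DeBruijn CO arity C) :
    Red R (M.deBruijn s) (M'.deBruijn s) := by
  induction h generalizing s with
  | beta x M N =>
    have : (subst1 M x N).deBruijn s =
        (M.deBruijn (Function.update (fun y => (s y).rename Nat.succ) x (.var 0))).bind
          (push (N.deBruijn s) .var) := by
      rw [subst1, Tm.deBruijn_subst, Tm.deBruijn_bind]
      congr 1; funext y
      rcases eq_or_ne y x with rfl | hyx
      · simp [DeBruijn.bind, push]
      · simp only [if_neg hyx, Function.update_of_ne hyx, rename_bind]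
        exact (bind_var _).symm
    rw [this]
    exact .beta _ _
  | rule r hr σ =>
    have := Red.rule hr fun x => (σ x).deBruijn s
    simpa only [lhsTm, Tm.deBruijn, Tm.deBruijn_appList, List.map_map, Function.comp_def,
      Pat.deBruijn_substT, Tm.deBruijn_subst] using this
  | appL _ ih => exact .appL _ (ih s)
  | appR _ ih => exact .appR _ (ih s)
  | lamC x _ ih => exact .lam (ih _)
  | conC i _ ih =>
    simp only [Tm.deBruijn, Function.apply_update (fun _ M => Tm.deBruijn M s)]
    exact .con _ i (ih s)

theorem sn_of_acc_red {M : Tm CO arity C} {s : ℕ → DeBruijn CO arity C}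
    (h : Acc (Function.swap (Red R)) (M.deBruijn s)) : SN R M :=
  Subrelation.accessible (fun h => Step.red h s)
    (InvImage.accessible (fun M : Tm CO arity C => M.deBruijn s) h)

end Reduction

/-! ### Intersection types -/

section IntersectionTypes

variable {CO : Type} {arity : CO → ℕ} {C : Type}

/-- Intersection types, which play the role of the compact elements of a domain. An intersection
is a nonempty finite family `Fin (n + 1) → ITy CO arity`; `con co n F` is the type of the terms
`co` applied to arguments of types `⋂ j, F i j`, and `star` is the type of the terms all of whose
reducts are stuck. There is no empty intersection, so every typed argument is terminating. -/
inductive ITy (CO : Type) (arity : CO → ℕ) : Type where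
  | star : ITy CO arity
  | con (co : CO) (n : Fin (arity co) → ℕ) (F : ∀ i, Fin (n i + 1) → ITy CO arity) : ITy CO arity
  | arr (n : ℕ) (S : Fin (n + 1) → ITy CO arity) (σ : ITy CO arity) : ITy CO arity

/-- A nonempty finite family of intersection types. -/
abbrev ITyFamily (CO : Type) (arity : CO → ℕ) : Type :=
  Σ n : ℕ, Fin (n + 1) → ITy CO arity

/-- The members of a family. -/
def ITyFamily.types (S : ITyFamily CO arity) : Set (ITy CO arity) :=
  Set.range S.2

/-- The iterated arrow type `S₁ → … → S_n → σ`. -/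
def ITy.arrs (Ss : List (ITyFamily CO arity)) (σ : ITy CO arity) : ITy CO arity :=
  Ss.foldr (fun S τ => .arr S.1 S.2 τ) σ

theorem exists_family_types_eq {A : Set (ITy CO arity)} (hfin : A.Finite) (hne : A.Nonempty) :
    ∃ S : ITyFamily CO arity, S.types = A := by
  obtain ⟨n, f, rfl⟩ := hfin.fin_embedding
  cases n with
  | zero => obtain ⟨-, i, -⟩ := hne; exact i.elim0
  | succ n => exact ⟨⟨n, f⟩, rfl⟩

/-- The types of the `i`-th argument of a term `co M₁ … M_n` that has all the types in `A`. -/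
def conProj (co : CO) (i : Fin (arity co)) (A : Set (ITy CO arity)) : Set (ITy CO arity) :=
  {τ | ∃ n F, .con co n F ∈ A ∧ τ ∈ Set.range (F i)}

/-- The types in `A` exclude that a term having all of them is an instance of the pattern. -/
def Pat.Clash : Pat CO arity → Set (ITy CO arity) → Prop
  | .pvar _, _ => False
  | .pcon co qs, A =>
    .star ∈ A ∨ (∃ co' n F, co' ≠ co ∧ .con co' n F ∈ A) ∨ ∃ i, (qs i).Clash (conProj co i A)

/-- The types of the variables obtained by matching a term that has all the types in `A`
against the pattern. -/
def Pat.env : Pat CO arity → Set (ITy CO arity) → ℕ → Set (ITy CO arity)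
  | .pvar y, A, x => if x = y then A else ∅
  | .pcon co qs, A, x => ⋃ i, (qs i).env (conProj co i A) x

/-- `Pat.Clash` for some component of a vector of patterns. -/
def ClashList : List (Pat CO arity) → List (Set (ITy CO arity)) → Prop
  | P :: Ps, A :: As => P.Clash A ∨ ClashList Ps As
  | _, _ => False

/-- `Pat.env` for a vector of patterns. -/
def envList : List (Pat CO arity) → List (Set (ITy CO arity)) → ℕ → Set (ITy CO arity)
  | P :: Ps, A :: As, x => P.env A x ∪ envList Ps As x
  | _, _, _ => ∅

/-- The intersection type assignment of a rewrite system. A constant has type `S₁ → … → S_n → σ`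
if the right hand sides of all its rules whose patterns do not clash with `S₁, …, S_n` have
type `σ`. -/
inductive Typ (R : Set (Rule CO arity C)) :
    (ℕ → Set (ITy CO arity)) → Tm CO arity C → ITy CO arity → Prop where
  | var {η : ℕ → Set (ITy CO arity)} {x : ℕ} {σ : ITy CO arity} :
      σ ∈ η x → Typ R η (.var x) σ
  | lam {η : ℕ → Set (ITy CO arity)} {y : ℕ} {M : Tm CO arity C} {n : ℕ}
      {S : Fin (n + 1) → ITy CO arity} {σ : ITy CO arity} :
      Typ R (Function.update η y (Set.range S)) M σ → Typ R η (.lam y M) (.arr n S σ)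
  | app {η : ℕ → Set (ITy CO arity)} {M N : Tm CO arity C} {n : ℕ}
      {S : Fin (n + 1) → ITy CO arity} {σ : ITy CO arity} :
      Typ R η M (.arr n S σ) → (∀ i, Typ R η N (S i)) → Typ R η (.app M N) σ
  | appStar {η : ℕ → Set (ITy CO arity)} {M N : Tm CO arity C} {τ : ITy CO arity} :
      Typ R η M .star → Typ R η N τ → Typ R η (.app M N) .star
  | con {η : ℕ → Set (ITy CO arity)} {co : CO} {f : Fin (arity co) → Tm CO arity C}
      {n : Fin (arity co) → ℕ} {F : ∀ i, Fin (n i + 1) → ITy CO arity} :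
      (∀ i j, Typ R η (f i) (F i j)) → Typ R η (.con co f) (.con co n F)
  | cst {η : ℕ → Set (ITy CO arity)} {c : C} {Ss : List (ITyFamily CO arity)} {σ : ITy CO arity} :
      (∀ r ∈ R, r.head = c → r.pats.length = Ss.length) →
      (∀ r ∈ R, r.head = c → ¬ ClashList r.pats (Ss.map ITyFamily.types) →
        Typ R (envList r.pats (Ss.map ITyFamily.types)) r.rhs σ) →
      Typ R η (.cst c) (.arrs Ss σ)

end IntersectionTypes

/-! ### Reducibility -/

section Reducibility

variable {CO : Type} {arity : CO → ℕ} {C : Type} {R : Set (Rule CO arity C)}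

open DeBruijn Relation

theorem apps_cst_injective {c c' : C} {l l' : List (DeBruijn CO arity C)}
    (h : (cst c).apps l = (cst c').apps l') : c = c' ∧ l = l' := by
  induction l using List.reverseRecOn generalizing l' with
  | nil =>
    cases l' using List.reverseRecOn with
    | nil => exact ⟨DeBruijn.cst.inj h, rfl⟩
    | append_singleton l' N' => simp [apps] at h
  | append_singleton l N ih =>
    cases l' using List.reverseRecOn with
    | nil => simp [apps] at h
    | append_singleton l' N' =>
      rw [apps_append_singleton, apps_append_singleton] at h
      obtain ⟨hl, rfl⟩ := DeBruijn.app.inj h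
      obtain ⟨rfl, rfl⟩ := ih hl
      exact ⟨rfl, rfl⟩

theorem apps_cst_ne_con (c : C) (l : List (DeBruijn CO arity C)) (co : CO)
    (f : Fin (arity co) → DeBruijn CO arity C) : (cst c).apps l ≠ con co f := by
  cases l using List.reverseRecOn <;> simp [apps]

theorem apps_cst_ne_lam (c : C) (l : List (DeBruijn CO arity C)) (B : DeBruijn CO arity C) :
    (cst c).apps l ≠ lam B := by
  cases l using List.reverseRecOn <;> simp [apps]

theorem apps_cst_ne_var (c : C) (l : List (DeBruijn CO arity C)) (n : ℕ) :
    (cst c).apps l ≠ var n := by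
  cases l using List.reverseRecOn <;> simp [apps]

theorem app_eq_apps_cst {c : C} {l : List (DeBruijn CO arity C)} {M N : DeBruijn CO arity C}
    (h : app M N = (cst c).apps l) : ∃ l', l = l' ++ [N] ∧ M = (cst c).apps l' := by
  cases l using List.reverseRecOn with
  | nil => simp [apps] at h
  | append_singleton l' N' =>
    rw [apps_append_singleton] at h
    obtain ⟨rfl, rfl⟩ := DeBruijn.app.inj h
    exact ⟨l', rfl, rfl⟩

theorem deBruijn_lhsTm (r : Rule CO arity C) (s : ℕ → DeBruijn CO arity C) :
    (lhsTm r).deBruijn s = (cst r.head).apps (r.pats.map fun P => P.toTm.deBruijn s) := by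
  rw [lhsTm, Tm.deBruijn_appList, List.map_map]; rfl

/-- A term that forms no redex when applied to arguments: it is neither an abstraction, nor a
constructor term, nor a constant with fewer arguments than one of its rules demands. -/
def Neutral (R : Set (Rule CO arity C)) (M : DeBruijn CO arity C) : Prop :=
  (∀ B, M ≠ lam B) ∧ (∀ co f, M ≠ con co f) ∧
    ∀ c l, M = (cst c).apps l → ∀ r ∈ R, r.head = c → r.pats.length ≤ l.length

theorem neutral_var (n : ℕ) : Neutral R (var n) :=
  ⟨by simp, by simp, fun _ _ h => absurd h.symm (apps_cst_ne_var _ _ _)⟩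

theorem neutral_app_lam (B N : DeBruijn CO arity C) : Neutral R (app (lam B) N) := by
  refine ⟨by simp, by simp, fun c l h => ?_⟩
  obtain ⟨l', -, hl'⟩ := app_eq_apps_cst h
  exact absurd hl'.symm (apps_cst_ne_lam _ _ _)

theorem neutral_apps_cst {c : C} {l : List (DeBruijn CO arity C)}
    (h : ∀ r ∈ R, r.head = c → r.pats.length ≤ l.length) : Neutral R ((cst c).apps l) := by
  refine ⟨fun _ => apps_cst_ne_lam _ _ _, fun _ _ => apps_cst_ne_con _ _ _ _, ?_⟩
  rintro c' l' h'
  obtain ⟨rfl, rfl⟩ := apps_cst_injective h'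
  exact h

theorem Neutral.app {M : DeBruijn CO arity C} (h : Neutral R M) (N : DeBruijn CO arity C) :
    Neutral R (app M N) := by
  refine ⟨by simp, by simp, fun c l hl r hr hc => ?_⟩
  obtain ⟨l', rfl, rfl⟩ := app_eq_apps_cst hl
  exact (h.2.2 c l' rfl r hr hc).trans (by simp)

theorem not_red_var (n : ℕ) (M : DeBruijn CO arity C) : ¬ Red R (var n) M := by
  intro h
  generalize hL : var n = L at h
  cases h with
  | @rule r _ s => exact apps_cst_ne_var _ _ _ ((deBruijn_lhsTm r s).symm.trans hL.symm)
  | _ => cases hL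

theorem red_app_cases {M N M' : DeBruijn CO arity C} (h : Red R (app M N) M') :
    (∃ B, M = lam B ∧ M' = B.bind (push N var)) ∨
    (∃ r ∈ R, ∃ l, M = (cst r.head).apps l ∧ l.length < r.pats.length) ∨
    (∃ M₁, Red R M M₁ ∧ M' = app M₁ N) ∨ ∃ N₁, Red R N N₁ ∧ M' = app M N₁ := by
  generalize hL : app M N = L at h
  cases h with
  | beta B N₀ => obtain ⟨rfl, rfl⟩ := DeBruijn.app.inj hL; exact .inl ⟨B, rfl, rfl⟩
  | @rule r hr s =>
    rw [deBruijn_lhsTm] at hL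
    obtain ⟨l, hl, hM⟩ := app_eq_apps_cst hL
    have := congrArg List.length hl
    exact .inr (.inl ⟨r, hr, l, hM, by simp at this; omega⟩)
  | appL _ h => obtain ⟨rfl, rfl⟩ := DeBruijn.app.inj hL; exact .inr (.inr (.inl ⟨_, h, rfl⟩))
  | appR _ h => obtain ⟨rfl, rfl⟩ := DeBruijn.app.inj hL; exact .inr (.inr (.inr ⟨_, h, rfl⟩))
  | lam => simp at hL
  | con => simp at hL

theorem Neutral.red_app_cases {M N M' : DeBruijn CO arity C} (hM : Neutral R M)
    (h : Red R (.app M N) M') :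
    (∃ M₁, Red R M M₁ ∧ M' = .app M₁ N) ∨ ∃ N₁, Red R N N₁ ∧ M' = .app M N₁ := by
  rcases SNPaper.red_app_cases h with ⟨B, rfl, -⟩ | ⟨r, hr, l, rfl, hl⟩ | h
  · exact absurd rfl (hM.1 B)
  · exact absurd (hM.2.2 _ l rfl r hr rfl) (by omega)
  · exact h

/-- One-step reduction in one component of a list of terms. -/
inductive RedList (R : Set (Rule CO arity C)) :
    List (DeBruijn CO arity C) → List (DeBruijn CO arity C) → Prop where
  | head {M M' : DeBruijn CO arity C} (l : List (DeBruijn CO arity C)) :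
      Red R M M' → RedList R (M :: l) (M' :: l)
  | tail (M : DeBruijn CO arity C) {l l' : List (DeBruijn CO arity C)} :
      RedList R l l' → RedList R (M :: l) (M :: l')

theorem RedList.append_right {l l' : List (DeBruijn CO arity C)} (h : RedList R l l')
    (m : List (DeBruijn CO arity C)) : RedList R (l ++ m) (l' ++ m) := by
  induction h with
  | head l h => exact .head _ h
  | tail M _ ih => exact .tail M ih

theorem RedList.append_left {m m' : List (DeBruijn CO arity C)} (h : RedList R m m')
    (l : List (DeBruijn CO arity C)) : RedList R (l ++ m) (l ++ m') := by
  induction l with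
  | nil => exact h
  | cons M l ih => exact .tail M ih

theorem acc_redList {l : List (DeBruijn CO arity C)}
    (h : ∀ M ∈ l, Acc (Function.swap (Red R)) M) : Acc (Function.swap (RedList R)) l := by
  induction l with
  | nil => exact ⟨_, fun _ h => by cases h⟩
  | cons M l ih =>
    obtain ⟨hM, hl⟩ := List.forall_mem_cons.1 h
    replace hl := ih hl
    clear ih h
    induction hM generalizing l with | _ M _ ihM
    induction hl with | _ l hl ihl
    refine ⟨_, fun m hm => ?_⟩
    cases hm with
    | head _ h => exact ihM _ h _ ⟨_, hl⟩
    | tail _ h => exact ihl _ h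

theorem redList_ofFn_update {n : ℕ} (f : Fin n → DeBruijn CO arity C) (i : Fin n)
    {N : DeBruijn CO arity C} (h : Red R (f i) N) :
    RedList R (List.ofFn f) (List.ofFn (Function.update f i N)) := by
  induction n with
  | zero => exact i.elim0
  | succ n ih =>
    rw [List.ofFn_succ, List.ofFn_succ]
    cases i using Fin.cases with
    | zero => simpa using .head _ h
    | succ i =>
      have : (fun j : Fin n => Function.update f i.succ N j.succ) =
          Function.update (fun j => f j.succ) i N := by
        funext j; simp [Function.update_apply]
      rw [this, Function.update_of_ne (Fin.succ_ne_zero i).symm]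
      exact .tail _ (ih _ i h)

theorem red_apps_cst_cases {c : C} {l : List (DeBruijn CO arity C)} {M' : DeBruijn CO arity C}
    (h : Red R ((cst c).apps l) M') :
    (∃ r ∈ R, r.head = c ∧ ∃ s l', l = (r.pats.map fun P => P.toTm.deBruijn s) ++ l' ∧
      M' = (r.rhs.deBruijn s).apps l') ∨
    ∃ l', RedList R l l' ∧ M' = (cst c).apps l' := by
  generalize hL : (cst c).apps l = L at h
  induction h generalizing l with
  | beta B N =>
    obtain ⟨l', -, h⟩ := app_eq_apps_cst hL.symm
    exact absurd h.symm (apps_cst_ne_lam _ _ _)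
  | @rule r hr s =>
    rw [deBruijn_lhsTm] at hL
    obtain ⟨rfl, rfl⟩ := apps_cst_injective hL
    exact .inl ⟨r, hr, rfl, s, [], by simp, rfl⟩
  | appL N h ih =>
    obtain ⟨l', rfl, rfl⟩ := app_eq_apps_cst hL.symm
    rcases ih rfl with ⟨r, hr, hc, s, m, rfl, rfl⟩ | ⟨m, hm, rfl⟩
    · exact .inl ⟨r, hr, hc, s, m ++ [N], by simp, by rw [apps_append_singleton]⟩
    · exact .inr ⟨m ++ [N], hm.append_right _, by rw [apps_append_singleton]⟩
  | appR M h _ =>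
    obtain ⟨l', rfl, rfl⟩ := app_eq_apps_cst hL.symm
    exact .inr ⟨l' ++ [_], .append_left (.head [] h) _, by rw [apps_append_singleton]⟩
  | lam => exact absurd hL (apps_cst_ne_lam _ _ _)
  | con => exact absurd hL (apps_cst_ne_con _ _ _ _)

/-- All reductions of `M` terminate and all reducts of `M` satisfy `Q`. -/
def HereditarilySN (R : Set (Rule CO arity C)) (Q : DeBruijn CO arity C → Prop)
    (M : DeBruijn CO arity C) : Prop :=
  Acc (Function.swap (Red R)) M ∧ ∀ M', ReflTransGen (Red R) M M' → Q M'

theorem HereditarilySN.of_red {Q : DeBruijn CO arity C → Prop} {M M' : DeBruijn CO arity C}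
    (hM : HereditarilySN R Q M) (h : Red R M M') : HereditarilySN R Q M' :=
  ⟨hM.1.inv h, fun M'' h' => hM.2 M'' (.head h h')⟩

theorem HereditarilySN.intro {Q : DeBruijn CO arity C → Prop} {M : DeBruijn CO arity C}
    (hM : Q M) (h : ∀ M', Red R M M' → HereditarilySN R Q M') : HereditarilySN R Q M := by
  refine ⟨⟨_, fun M' hM' => (h M' hM').1⟩, fun M' hM' => ?_⟩
  rcases hM'.cases_head with rfl | ⟨M₁, h₁, h₂⟩
  · exact hM
  · exact (h M₁ h₁).2 M' h₂

/-- The reducible terms of an intersection type. -/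
def Reducible (R : Set (Rule CO arity C)) : ITy CO arity → DeBruijn CO arity C → Prop
  | .star, M => HereditarilySN R (Neutral R) M
  | .con co _ F, M =>
    HereditarilySN R (fun M' => (∀ co' f, M' = con co' f → co' = co) ∧
      ∀ f, M' = con co f → ∀ i j, Reducible R (F i j) (f i)) M
  | .arr _ S σ, M => ∀ N, (∀ i, Reducible R (S i) N) → Reducible R σ (app M N)

theorem Reducible.of_red {τ : ITy CO arity} {M M' : DeBruijn CO arity C}
    (hM : Reducible R τ M) (h : Red R M M') : Reducible R τ M' := by
  induction τ generalizing M M' with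
  | star => exact HereditarilySN.of_red hM h
  | con co n F => exact HereditarilySN.of_red hM h
  | arr n S σ _ ihσ => exact fun N hN => ihσ (hM N hN) (.appL N h)

theorem acc_of_acc_app {M N : DeBruijn CO arity C}
    (h : Acc (Function.swap (Red R)) (app M N)) : Acc (Function.swap (Red R)) M :=
  Subrelation.accessible (fun {_ _} h => Red.appL N h)
    (InvImage.accessible (fun M => DeBruijn.app M N) h)

theorem reducible_acc_and_of_neutral (τ : ITy CO arity) :
    (∀ M, Reducible R τ M → Acc (Function.swap (Red R)) M) ∧
    ∀ M, Neutral R M → (∀ M', Red R M M' → Reducible R τ M') → Reducible R τ M := by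
  induction τ with
  | star => exact ⟨fun M hM => hM.1, fun M hM h => .intro hM h⟩
  | con co n F =>
    exact ⟨fun M hM => hM.1, fun M hM h => .intro
      ⟨fun _ _ h' => absurd h' (hM.2.1 _ _), fun _ h' => absurd h' (hM.2.1 _ _)⟩ h⟩
  | arr n S σ ihS ihσ =>
    refine ⟨fun M hM => acc_of_acc_app (ihσ.1 _ (hM (var 0) fun i =>
      (ihS i).2 _ (neutral_var 0) fun _ h => absurd h (not_red_var _ _))), fun M hM h N hN => ?_⟩
    have hacc : Acc (Function.swap (Red R)) N := (ihS 0).1 N (hN 0)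
    induction hacc with | _ N _ ihN
    refine ihσ.2 _ (hM.app N) fun M' h' => ?_
    rcases hM.red_app_cases h' with ⟨M₁, h₁, rfl⟩ | ⟨N₁, h₁, rfl⟩
    · exact h M₁ h₁ N hN
    · exact ihN N₁ h₁ fun i => (hN i).of_red h₁

theorem Reducible.acc {τ : ITy CO arity} {M : DeBruijn CO arity C} (h : Reducible R τ M) :
    Acc (Function.swap (Red R)) M :=
  (reducible_acc_and_of_neutral τ).1 M h

theorem Neutral.reducible {τ : ITy CO arity} {M : DeBruijn CO arity C} (hM : Neutral R M)
    (h : ∀ M', Red R M M' → Reducible R τ M') : Reducible R τ M :=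
  (reducible_acc_and_of_neutral τ).2 M hM h

theorem reducible_var (τ : ITy CO arity) (n : ℕ) : Reducible R τ (var n) :=
  (neutral_var n).reducible fun _ h => absurd h (not_red_var _ _)

theorem reducible_star_app {M N : DeBruijn CO arity C} (hM : Reducible R .star M)
    (hN : Acc (Function.swap (Red R)) N) : Reducible R .star (app M N) := by
  obtain ⟨hacc, hneutral⟩ := hM
  induction hacc generalizing N with | _ M _ ihM
  induction hN with | _ N hN' ihN
  have hM : Neutral R M := hneutral M .refl
  refine (hM.app N).reducible fun M' h => ?_
  rcases hM.red_app_cases h with ⟨M₁, h₁, rfl⟩ | ⟨N₁, h₁, rfl⟩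
  · exact ihM M₁ h₁ ⟨_, hN'⟩ fun M₂ h₂ => hneutral M₂ (.head h₁ h₂)
  · exact ihN N₁ h₁

theorem reducible_app_lam {τ : ITy CO arity} {B N : DeBruijn CO arity C}
    (hB : Acc (Function.swap (Red R)) B) (hN : Acc (Function.swap (Red R)) N)
    (h : ∀ N', ReflTransGen (Red R) N N' → Reducible R τ (B.bind (push N' var))) :
    Reducible R τ (app (lam B) N) := by
  induction hB generalizing N with | _ B _ ihB
  induction hN with | _ N hN' ihN
  refine (neutral_app_lam B N).reducible fun M' hM' => ?_
  rcases red_app_cases hM' with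
    ⟨B', hB, rfl⟩ | ⟨r, -, l, hl, -⟩ | ⟨M₁, hM₁, rfl⟩ | ⟨N₁, hN₁, rfl⟩
  · cases hB
    exact h N .refl
  · exact absurd hl.symm (apps_cst_ne_lam _ _ _)
  · generalize hL : lam B = L at hM₁
    cases hM₁ with
    | lam hB =>
      cases hL
      exact ihB _ hB ⟨_, hN'⟩ fun N' hN' => (h N' hN').of_red (hB.bind _)
    | @rule r _ s => exact absurd ((deBruijn_lhsTm r s).symm.trans hL.symm) (apps_cst_ne_lam _ _ _)
    | _ => cases hL
  · exact ihN N₁ hN₁ fun N' hN' => h N' (.head hN₁ hN')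

theorem reducible_lam {n : ℕ} {S : Fin (n + 1) → ITy CO arity} {σ : ITy CO arity}
    {B : DeBruijn CO arity C}
    (h : ∀ N, (∀ i, Reducible R (S i) N) → Reducible R σ (B.bind (push N var))) :
    Reducible R (.arr n S σ) (lam B) := by
  have hB : Acc (Function.swap (Red R)) B :=
    Subrelation.accessible (fun h => Red.bind h _) (InvImage.accessible
      (fun M => DeBruijn.bind M (push (var 0) var)) (h (var 0) fun i => reducible_var _ _).acc)
  intro N hN
  refine reducible_app_lam hB (hN 0).acc fun N' hN' => h N' fun i => ?_
  induction hN' with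
  | refl => exact hN i
  | tail _ h₁ ih => exact ih.of_red h₁

theorem red_con_cases {co : CO} {f : Fin (arity co) → DeBruijn CO arity C}
    {M' : DeBruijn CO arity C} (h : Red R (con co f) M') :
    ∃ i N, Red R (f i) N ∧ M' = con co (Function.update f i N) := by
  generalize hL : con co f = L at h
  cases h with
  | con f' i h =>
    obtain ⟨rfl, hf⟩ := DeBruijn.con.inj hL
    obtain rfl := eq_of_heq hf
    exact ⟨i, _, h, rfl⟩
  | @rule r _ s =>
    exact absurd ((deBruijn_lhsTm r s).symm.trans hL.symm) (apps_cst_ne_con _ _ _ _)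
  | _ => cases hL

theorem reducible_con {co : CO} {n : Fin (arity co) → ℕ} {F : ∀ i, Fin (n i + 1) → ITy CO arity}
    {f : Fin (arity co) → DeBruijn CO arity C} (h : ∀ i j, Reducible R (F i j) (f i)) :
    Reducible R (.con co n F) (con co f) := by
  have hacc : Acc (Function.swap (RedList R)) (List.ofFn f) := acc_redList fun M hM => by
    obtain ⟨i, rfl⟩ := (List.mem_ofFn' f M).1 hM
    exact (h i 0).acc
  generalize hl : List.ofFn f = l at hacc
  induction hacc generalizing f with | _ l _ ih
  subst hl
  refine HereditarilySN.intro ⟨?_, ?_⟩ fun M' hM' => ?_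
  · rintro co' f' hf
    exact (DeBruijn.con.inj hf).1.symm
  · rintro f' hf
    obtain rfl := eq_of_heq (DeBruijn.con.inj hf).2
    exact h
  · obtain ⟨i, N, hN, rfl⟩ := red_con_cases hM'
    refine ih _ (redList_ofFn_update f i hN) (fun k j => ?_) rfl
    rcases eq_or_ne k i with rfl | hk
    · rw [Function.update_self]
      exact (h k j).of_red hN
    · rw [Function.update_of_ne hk]
      exact h k j

theorem Reducible.match {P : Pat CO arity} {A : Set (ITy CO arity)}
    {s : ℕ → DeBruijn CO arity C} (h : ∀ τ ∈ A, Reducible R τ (P.toTm.deBruijn s)) :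
    ¬ P.Clash A ∧ ∀ x, ∀ τ ∈ P.env A x, Reducible R τ (s x) := by
  induction P generalizing A with
  | pvar y =>
    refine ⟨id, fun x τ hτ => ?_⟩
    simp only [Pat.env] at hτ
    split_ifs at hτ with hx
    · exact hx ▸ h τ hτ
    · exact hτ.elim
  | pcon co qs ih =>
    have hproj (i) : ∀ τ ∈ conProj co i A, Reducible R τ ((qs i).toTm.deBruijn s) := by
      rintro _ ⟨n, F, hF, j, rfl⟩
      exact ((h _ hF).2 _ .refl).2 _ rfl i j
    refine ⟨?_, fun x τ hτ => ?_⟩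
    · rintro (hstar | ⟨co', n, F, hco, hF⟩ | ⟨i, hi⟩)
      · exact ((h _ hstar).2 _ .refl).2.1 _ _ rfl
      · exact hco (((h _ hF).2 _ .refl).1 _ _ rfl).symm
      · exact (ih i (hproj i)).1 hi
    · obtain ⟨i, hi⟩ := Set.mem_iUnion.1 hτ
      exact (ih i (hproj i)).2 x τ hi

theorem Reducible.matchList {Ps : List (Pat CO arity)} {As : List (Set (ITy CO arity))}
    {s : ℕ → DeBruijn CO arity C}
    (h : List.Forall₂ (fun A M => ∀ τ ∈ A, Reducible R τ M) As
      (Ps.map fun P => P.toTm.deBruijn s)) :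
    ¬ ClashList Ps As ∧ ∀ x, ∀ τ ∈ envList Ps As x, Reducible R τ (s x) := by
  induction Ps generalizing As with
  | nil => exact ⟨id, fun _ _ hτ => hτ.elim⟩
  | cons P Ps ih =>
    obtain _ | ⟨hA, hAs⟩ := h
    obtain ⟨hP, hPx⟩ := Reducible.match hA
    obtain ⟨hPs, hPsx⟩ := ih hAs
    exact ⟨fun h => h.elim hP hPs, fun x τ hτ => hτ.elim (hPx x τ) (hPsx x τ)⟩

theorem reducible_arrs {Ss : List (ITyFamily CO arity)} {σ : ITy CO arity}
    {M : DeBruijn CO arity C}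
    (h : ∀ l, List.Forall₂ (fun S N => ∀ τ ∈ S.types, Reducible R τ N) Ss l →
      Reducible R σ (M.apps l)) : Reducible R (.arrs Ss σ) M := by
  induction Ss generalizing M with
  | nil => exact h [] .nil
  | cons S Ss ih =>
    exact fun N hN => ih fun l hl => h (N :: l) (.cons (Set.forall_mem_range.2 hN) hl)

theorem RedList.forall₂ {α : Type*} {Q : α → DeBruijn CO arity C → Prop}
    (hQ : ∀ a M M', Q a M → Red R M M' → Q a M') {as : List α}
    {l l' : List (DeBruijn CO arity C)} (hl : RedList R l l') (h : List.Forall₂ Q as l) :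
    List.Forall₂ Q as l' := by
  induction hl generalizing as with
  | head l hM => cases h with | cons hA hAs => exact .cons (hQ _ _ _ hA hM) hAs
  | tail M _ ih => cases h with | cons hA hAs => exact .cons hA (ih hAs)

theorem reducible_apps_cst {c : C} {Ss : List (ITyFamily CO arity)} {σ : ITy CO arity}
    {l : List (DeBruijn CO arity C)}
    (hlen : ∀ r ∈ R, r.head = c → r.pats.length = Ss.length)
    (hrhs : ∀ r ∈ R, r.head = c → ∀ s,
      List.Forall₂ (fun S N => ∀ τ ∈ S.types, Reducible R τ N) Ss
        (r.pats.map fun P => P.toTm.deBruijn s) → Reducible R σ (r.rhs.deBruijn s))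
    (hl : List.Forall₂ (fun S N => ∀ τ ∈ S.types, Reducible R τ N) Ss l) :
    Reducible R σ ((cst c).apps l) := by
  have hacc : Acc (Function.swap (RedList R)) l := acc_redList
    (List.forall₂_and_left _ _ |>.1 (hl.flip.imp fun N S h => ⟨(h _ ⟨0, rfl⟩).acc, h⟩)).1
  induction hacc with | _ l _ ih
  refine (neutral_apps_cst fun r hr hc => (hlen r hr hc).trans_le hl.length_eq.le).reducible
    fun M' hM' => ?_
  rcases red_apps_cst_cases hM' with ⟨r, hr, hc, s, l', rfl, rfl⟩ | ⟨l', hl', rfl⟩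
  · obtain rfl : l' = [] := by
      rw [← List.length_eq_zero_iff]
      simpa [hlen r hr hc] using hl.length_eq
    exact hrhs r hr hc s (by simpa using hl)
  · exact ih l' hl' (hl'.forall₂ (fun _ _ _ h hM τ hτ => (h τ hτ).of_red hM) hl)

theorem Typ.reducible {η : ℕ → Set (ITy CO arity)} {M : Tm CO arity C} {σ : ITy CO arity}
    (h : Typ R η M σ) {s : ℕ → DeBruijn CO arity C} (hs : ∀ x, ∀ τ ∈ η x, Reducible R τ (s x)) :
    Reducible R σ (M.deBruijn s) := by
  induction h generalizing s with
  | var h => exact hs _ _ h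
  | @lam _ y _ _ _ _ _ ih =>
    refine reducible_lam fun N hN => ?_
    rw [Tm.deBruijn_bind]
    refine ih fun x τ hτ => ?_
    rcases eq_or_ne x y with rfl | hxy
    · rw [Function.update_self] at hτ ⊢
      obtain ⟨i, rfl⟩ := hτ
      exact hN i
    · rw [Function.update_of_ne hxy] at hτ ⊢
      rw [rename_bind]
      exact (bind_var (s x)).symm ▸ hs x τ hτ
  | app _ _ ihM ihN => exact ihM hs _ fun i => ihN i hs
  | appStar _ _ ihM ihN => exact reducible_star_app (ihM hs) (ihN hs).acc
  | con _ ih => exact reducible_con fun i j => ih i j hs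
  | cst hlen _ ih =>
    refine reducible_arrs fun l hl => reducible_apps_cst hlen (fun r hr hc s hs => ?_) hl
    obtain ⟨hclash, henv⟩ := Reducible.matchList (List.forall₂_map_left_iff.2 hs)
    exact ih r hr hc hclash henv

theorem Typ.sn {η : ℕ → Set (ITy CO arity)} {M : Tm CO arity C} {σ : ITy CO arity}
    (h : Typ R η M σ) : SN R M :=
  sn_of_acc_red (h.reducible (s := DeBruijn.var) fun _ _ _ => reducible_var _ _).acc

end Reducibility

/-! ### The filter model -/

section FilterModel

variable {CO : Type} {arity : CO → ℕ} {C : Type} {R : Set (Rule CO arity C)}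

open Filter

theorem conProj_mono {co : CO} {i : Fin (arity co)} {A B : Set (ITy CO arity)} (h : A ⊆ B) :
    conProj co i A ⊆ conProj co i B :=
  fun _ ⟨n, F, hF, hτ⟩ => ⟨n, F, h hF, hτ⟩

theorem Pat.Clash.mono {P : Pat CO arity} {A B : Set (ITy CO arity)} (h : P.Clash A)
    (hAB : A ⊆ B) : P.Clash B := by
  induction P generalizing A B with
  | pvar y => exact h
  | pcon co qs ih =>
    exact h.imp (@hAB _) <| .imp (fun ⟨co', n, F, hco, hF⟩ => ⟨co', n, F, hco, hAB hF⟩)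
      fun ⟨i, hi⟩ => ⟨i, ih i hi (conProj_mono hAB)⟩

theorem Pat.env_mono (P : Pat CO arity) {A B : Set (ITy CO arity)} (h : A ⊆ B) (x : ℕ) :
    P.env A x ⊆ P.env B x := by
  induction P generalizing A B with
  | pvar y =>
    simp only [Pat.env]
    split_ifs
    exacts [h, subset_rfl]
  | pcon co qs ih => exact Set.iUnion_mono fun i => ih i (conProj_mono h)

theorem Typ.mono {η η' : ℕ → Set (ITy CO arity)} {M : Tm CO arity C} {σ : ITy CO arity}
    (h : Typ R η M σ) (hη : ∀ x, η x ⊆ η' x) : Typ R η' M σ := by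
  induction h generalizing η' with
  | var h => exact .var (hη _ h)
  | @lam _ y _ _ _ _ _ ih =>
    refine .lam (ih fun x => ?_)
    rcases eq_or_ne x y with rfl | hxy
    · simp
    · simpa [hxy] using hη x
  | app _ _ ihM ihN => exact .app (ihM hη) fun i => ihN i hη
  | appStar _ _ ihM ihN => exact .appStar (ihM hη) (ihN hη)
  | con _ ih => exact .con fun i j => ih i j hη
  | cst hlen hrhs _ => exact .cst hlen hrhs

/- Scott continuity is stated for limits `{τ | ∀ᶠ i in l, τ ∈ A i}` of families of sets along a
filter. -/

variable {ι : Type*} {l : Filter ι}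

theorem eventually_mem_conProj {co : CO} {i : Fin (arity co)} {A : ι → Set (ITy CO arity)}
    {τ : ITy CO arity} (h : τ ∈ conProj co i {σ | ∀ᶠ k in l, σ ∈ A k}) :
    ∀ᶠ k in l, τ ∈ conProj co i (A k) := by
  obtain ⟨n, F, hF, hτ⟩ := h
  exact hF.mono fun k hk => ⟨n, F, hk, hτ⟩

theorem Pat.Clash.eventually {P : Pat CO arity} {A : ι → Set (ITy CO arity)}
    (h : P.Clash {τ | ∀ᶠ k in l, τ ∈ A k}) : ∀ᶠ k in l, P.Clash (A k) := by
  induction P generalizing A with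
  | pvar y => exact h.elim
  | pcon co qs ih =>
    obtain hstar | ⟨co', n, F, hco, hF⟩ | ⟨i, hi⟩ := h
    · exact hstar.mono fun k hk => .inl hk
    · exact hF.mono fun k hk => .inr (.inl ⟨co', n, F, hco, hk⟩)
    · exact (ih i (hi.mono fun _ => eventually_mem_conProj)).mono fun k hk => .inr (.inr ⟨i, hk⟩)

theorem Pat.eventually_mem_env {P : Pat CO arity} {A : ι → Set (ITy CO arity)} {x : ℕ}
    {τ : ITy CO arity} (h : τ ∈ P.env {σ | ∀ᶠ k in l, σ ∈ A k} x) :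
    ∀ᶠ k in l, τ ∈ P.env (A k) x := by
  induction P generalizing A with
  | pvar y =>
    simp only [Pat.env] at h ⊢
    split_ifs at h ⊢
    exacts [h, h.elim]
  | pcon co qs ih =>
    obtain ⟨i, hi⟩ := Set.mem_iUnion.1 h
    exact (ih i ((qs i).env_mono (fun _ => eventually_mem_conProj) x hi)).mono
      fun k hk => Set.mem_iUnion.2 ⟨i, hk⟩

theorem ClashList.eventually {Ps : List (Pat CO arity)} {As : List (ι → Set (ITy CO arity))}
    (h : ClashList Ps (As.map fun A => {τ | ∀ᶠ k in l, τ ∈ A k})) :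
    ∀ᶠ k in l, ClashList Ps (As.map fun A => A k) := by
  induction Ps generalizing As with
  | nil => exact h.elim
  | cons P Ps ih =>
    cases As with
    | nil => exact h.elim
    | cons A As =>
      rcases h with h | h
      · exact h.eventually.mono fun _ => .inl
      · exact (ih h).mono fun _ => .inr

theorem eventually_mem_envList {Ps : List (Pat CO arity)} {As : List (ι → Set (ITy CO arity))}
    {x : ℕ} {τ : ITy CO arity}
    (h : τ ∈ envList Ps (As.map fun A => {σ | ∀ᶠ k in l, σ ∈ A k}) x) :
    ∀ᶠ k in l, τ ∈ envList Ps (As.map fun A => A k) x := by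
  induction Ps generalizing As with
  | nil => exact h.elim
  | cons P Ps ih =>
    cases As with
    | nil => exact h.elim
    | cons A As =>
      rcases h with h | h
      · exact (Pat.eventually_mem_env h).mono fun _ => .inl
      · exact (ih h).mono fun _ => .inr

theorem Typ.eventually {η : ι → ℕ → Set (ITy CO arity)} {M : Tm CO arity C} {σ : ITy CO arity}
    (h : Typ R (fun x => {τ | ∀ᶠ k in l, τ ∈ η k x}) M σ) : ∀ᶠ k in l, Typ R (η k) M σ := by
  generalize hη : (fun x => {τ | ∀ᶠ k in l, τ ∈ η k x}) = η' at h
  replace hη : ∀ x, η' x ⊆ {τ | ∀ᶠ k in l, τ ∈ η k x} := fun x => hη ▸ subset_rfl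
  induction h generalizing η with
  | var h => exact (hη _ h).mono fun _ => .var
  | @lam _ y _ _ _ _ _ ih =>
    refine (ih fun x => ?_).mono fun _ => .lam
    rcases eq_or_ne x y with rfl | hxy
    · simp +contextual [Set.subset_def]
    · simpa [hxy] using hη x
  | app _ _ ihM ihN =>
    filter_upwards [ihM hη, eventually_all.2 fun i => ihN i hη] with k hM hN using .app hM hN
  | appStar _ _ ihM ihN =>
    filter_upwards [ihM hη, ihN hη] with k hM hN using .appStar hM hN
  | con _ ih =>
    filter_upwards [eventually_all.2 fun i => eventually_all.2 fun j => ih i j hη] with k hk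
      using .con hk
  | cst hlen hrhs _ => exact .of_forall fun _ => .cst hlen hrhs

theorem setOf_eventually_mem_inter (A : Set (ITy CO arity)) :
    {τ | ∀ᶠ t : Finset (ITy CO arity) in atTop, τ ∈ A ∩ t} = A := by
  ext τ
  refine ⟨fun h => h.exists.elim fun _ => And.left, fun h => ?_⟩
  filter_upwards [eventually_ge_atTop {τ}] with t ht using ⟨h, by simpa using ht⟩

theorem eventually_inter_nonempty {A : Set (ITy CO arity)} (hA : A.Nonempty) :
    ∀ᶠ t : Finset (ITy CO arity) in atTop, (A ∩ t).Nonempty := by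
  obtain ⟨τ, hτ⟩ := hA
  filter_upwards [eventually_ge_atTop {τ}] with t ht using ⟨τ, hτ, by simpa using ht⟩

/-- The denotation of a term in the filter model: the set of its types. -/
def den (R : Set (Rule CO arity C)) (η : ℕ → Set (ITy CO arity)) (M : Tm CO arity C) :
    Set (ITy CO arity) :=
  {σ | Typ R η M σ}

/-- The denotation of a constant, which does not depend on an environment. -/
def denCst (R : Set (Rule CO arity C)) (c : C) : Set (ITy CO arity) :=
  den R (fun _ => ∅) (.cst c)

/-- Application in the filter model, written `d ⬝ a`. -/
def appSet (d a : Set (ITy CO arity)) : Set (ITy CO arity) :=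
  {σ | ∃ n S, .arr n S σ ∈ d ∧ Set.range S ⊆ a} ∪ {σ | σ = .star ∧ .star ∈ d ∧ a.Nonempty}

infixl:70 " ⬝ " => appSet

/-- A constructor in the filter model. -/
def conSet (co : CO) (a : Fin (arity co) → Set (ITy CO arity)) : Set (ITy CO arity) :=
  {σ | ∃ n F, σ = .con co n F ∧ ∀ i j, F i j ∈ a i}

theorem den_var (η : ℕ → Set (ITy CO arity)) (x : ℕ) : den R η (.var x) = η x :=
  Set.ext fun _ => ⟨fun h => by cases h; assumption, .var⟩

theorem den_cst (η : ℕ → Set (ITy CO arity)) (c : C) : den R η (.cst c) = denCst R c :=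
  Set.ext fun _ => ⟨fun | .cst hlen hrhs => .cst hlen hrhs, fun | .cst hlen hrhs => .cst hlen hrhs⟩

theorem den_app (η : ℕ → Set (ITy CO arity)) (M N : Tm CO arity C) :
    den R η (.app M N) = den R η M ⬝ den R η N := by
  ext σ
  constructor
  · intro h
    cases h with
    | app hM hN => exact .inl ⟨_, _, hM, Set.range_subset_iff.2 hN⟩
    | appStar hM hN => exact .inr ⟨rfl, hM, _, hN⟩
  · rintro (⟨n, S, hM, hN⟩ | ⟨rfl, hM, τ, hN⟩)
    · exact .app hM (Set.range_subset_iff.1 hN)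
    · exact .appStar hM hN

theorem den_con (η : ℕ → Set (ITy CO arity)) (co : CO) (f : Fin (arity co) → Tm CO arity C) :
    den R η (.con co f) = conSet co fun i => den R η (f i) := by
  ext σ
  constructor
  · intro h
    cases h with
    | con h => exact ⟨_, _, rfl, h⟩
  · rintro ⟨n, F, rfl, h⟩
    exact .con h

theorem den_subset_den_lam_appSet {η : ℕ → Set (ITy CO arity)} {a : Set (ITy CO arity)}
    (ha : a.Nonempty) (y : ℕ) (M : Tm CO arity C) :
    den R (Function.update η y a) M ⊆ den R η (.lam y M) ⬝ a := by
  intro σ hσ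
  have approx : ∀ᶠ t : Finset (ITy CO arity) in atTop,
      Typ R (Function.update η y (a ∩ t)) M σ := by
    refine Typ.eventually (hσ.mono fun x => ?_)
    rcases eq_or_ne x y with rfl | hxy
    · simp only [Function.update_self, setOf_eventually_mem_inter, subset_rfl]
    · simp +contextual [hxy, Set.subset_def]
  obtain ⟨t, hM, ht⟩ := (approx.and (eventually_inter_nonempty ha)).exists
  obtain ⟨⟨n, S⟩, hS⟩ := exists_family_types_eq (t.finite_toSet.inter_of_right a) ht
  change Set.range S = _ at hS
  rw [← hS] at hM
  exact .inl ⟨n, S, .lam hM, hS ▸ Set.inter_subset_left⟩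

theorem appSet_mono {d d' a a' : Set (ITy CO arity)} (hd : d ⊆ d') (ha : a ⊆ a') :
    d ⬝ a ⊆ d' ⬝ a' := by
  rintro σ (⟨n, S, hS, hSa⟩ | ⟨rfl, hstar, hne⟩)
  · exact .inl ⟨n, S, hd hS, hSa.trans ha⟩
  · exact .inr ⟨rfl, hd hstar, hne.mono ha⟩

theorem eventually_mem_appSet {d : Set (ITy CO arity)} {A : ι → Set (ITy CO arity)}
    {σ : ITy CO arity} (h : σ ∈ d ⬝ {τ | ∀ᶠ k in l, τ ∈ A k}) : ∀ᶠ k in l, σ ∈ d ⬝ A k := by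
  rcases h with ⟨n, S, hS, hSA⟩ | ⟨rfl, hstar, τ, hτ⟩
  · filter_upwards [eventually_all.2 fun i => hSA ⟨i, rfl⟩] with k hk
      using .inl ⟨n, S, hS, Set.range_subset_iff.2 hk⟩
  · exact hτ.mono fun k hk => .inr ⟨rfl, hstar, τ, hk⟩

theorem mem_foldl_appSet {Ss : List (ITyFamily CO arity)} {σ : ITy CO arity}
    {d : Set (ITy CO arity)} {As : List (Set (ITy CO arity))} (hd : .arrs Ss σ ∈ d)
    (h : List.Forall₂ (fun S A => S.types ⊆ A) Ss As) : σ ∈ As.foldl appSet d := by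
  induction h generalizing d with
  | nil => exact hd
  | cons hS _ ih => exact ih (.inl ⟨_, _, hd, hS⟩)

theorem eventually_clashList_or_typ_inter {Ps : List (Pat CO arity)} {M : Tm CO arity C}
    {σ : ITy CO arity} {As : List (Set (ITy CO arity))}
    (h : ClashList Ps As ∨ σ ∈ den R (envList Ps As) M) :
    ∀ᶠ t : Finset (ITy CO arity) in atTop,
      ClashList Ps (As.map (· ∩ ↑t)) ∨ Typ R (envList Ps (As.map (· ∩ ↑t))) M σ := by
  have limit : As = (As.map fun A (t : Finset (ITy CO arity)) => A ∩ (t : Set _)).map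
      fun A => {τ | ∀ᶠ t in atTop, τ ∈ A t} := by
    simp only [List.map_map, Function.comp_def, setOf_eventually_mem_inter, List.map_id']
  rw [limit] at h
  rcases h with h | h
  · exact h.eventually.mono fun t ht => .inl (by simpa [Function.comp_def] using ht)
  · have typ : ∀ᶠ t : Finset (ITy CO arity) in atTop,
        Typ R (envList Ps (As.map (· ∩ ↑t))) M σ := by
      refine Typ.eventually (Typ.mono h fun x τ hτ => ?_)
      simpa [Function.comp_def] using eventually_mem_envList hτ
    exact typ.mono fun _ => .inr

theorem mem_denCst_foldl {c : C} {σ : ITy CO arity} {As : List (Set (ITy CO arity))}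
    (hfin : {r ∈ R | r.head = c}.Finite) (hne : ∀ A ∈ As, A.Nonempty)
    (hlen : ∀ r ∈ R, r.head = c → r.pats.length = As.length)
    (hrhs : ∀ r ∈ R, r.head = c → ClashList r.pats As ∨ σ ∈ den R (envList r.pats As) r.rhs) :
    σ ∈ As.foldl appSet (denCst R c) := by
  have hrules := (eventually_all_finite hfin).2 fun r ⟨hr, hc⟩ =>
    eventually_clashList_or_typ_inter (hrhs r hr hc)
  have hnonempty : ∀ᶠ t : Finset (ITy CO arity) in atTop, ∀ A ∈ As, (A ∩ t).Nonempty := by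
    simpa only [List.mem_toFinset] using (eventually_all_finset As.toFinset).2 fun A hA =>
      eventually_inter_nonempty (hne A (List.mem_toFinset.1 hA))
  obtain ⟨t, hrules, hnonempty⟩ := (hrules.and hnonempty).exists
  have family (A) (hA : A ∈ As) : ∃ S : ITyFamily CO arity, S.types = A ∩ t :=
    exists_family_types_eq (t.finite_toSet.inter_of_right A) (hnonempty A hA)
  have : Nonempty (ITyFamily CO arity) := ⟨⟨0, fun _ => .star⟩⟩
  choose! S hS using family
  have htypes : (As.map S).map ITyFamily.types = As.map (· ∩ ↑t) := by simpa using hS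
  refine mem_foldl_appSet (Ss := As.map S) (.cst (by simpa using hlen) fun r hr hc hclash => ?_)
    (List.forall₂_map_left_iff.2 (List.forall₂_same.2 fun A hA => hS A hA ▸ Set.inter_subset_left))
  rw [htypes] at hclash ⊢
  exact (hrules r ⟨hr, hc⟩).resolve_left hclash

theorem subset_conProj_conSet {co : CO}
    {a : Fin (arity co) → Set (ITy CO arity)} (hne : ∀ i, (a i).Nonempty) (i : Fin (arity co)) :
    a i ⊆ conProj co i (conSet co a) := by
  intro σ hσ
  choose τ hτ using hne
  refine ⟨fun _ => 0, fun j _ => Function.update τ i σ j, ⟨_, _, rfl, fun j _ => ?_⟩, 0, by simp⟩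
  rcases eq_or_ne j i with rfl | hji
  · simpa using hσ
  · simpa [hji] using hτ j

theorem Pat.clash_of_con_mem {co co' : CO}
    {qs : Fin (arity co) → Pat CO arity} {A : Set (ITy CO arity)} {n : Fin (arity co') → ℕ}
    {F : ∀ i, Fin (n i + 1) → ITy CO arity} (h : .con co' n F ∈ A) (hne : co' ≠ co) :
    (Pat.pcon co qs).Clash A :=
  .inr (.inl ⟨co', n, F, hne, h⟩)

theorem Pat.clash_of_conProj_nonempty {co co' : CO}
    {qs : Fin (arity co) → Pat CO arity} {A : Set (ITy CO arity)} {i : Fin (arity co')}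
    (h : (conProj co' i A).Nonempty) (hne : co' ≠ co) : (Pat.pcon co qs).Clash A := by
  obtain ⟨_, _, _, hF, -⟩ := h
  exact clash_of_con_mem hF hne

theorem Pat.clash_of_star_mem {co : CO}
    {qs : Fin (arity co) → Pat CO arity} {A : Set (ITy CO arity)} (h : .star ∈ A) :
    (Pat.pcon co qs).Clash A :=
  .inl h

theorem nonempty_of_conProj_nonempty {co : CO} {i : Fin (arity co)}
    {A : Set (ITy CO arity)} (h : (conProj co i A).Nonempty) : A.Nonempty := by
  obtain ⟨_, _, _, hF, -⟩ := h
  exact ⟨_, hF⟩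

theorem conProj_nonempty {co : CO} {i j : Fin (arity co)}
    {A : Set (ITy CO arity)} (h : (conProj co i A).Nonempty) : (conProj co j A).Nonempty := by
  obtain ⟨_, n, F, hF, -⟩ := h
  exact ⟨F j 0, n, F, hF, 0, rfl⟩

end FilterModel

/-! ### The equations of MBR in the filter model -/

section MBREquations

/-- An element of the filter model over the constructors of system F. -/
abbrev Value : Type :=
  Set (ITy FCO fArity)

/-- The type of a nullary constructor, which is the only one up to equality. For other
constructors this is an arbitrary choice. -/
def ITy.atom (co : FCO) : ITy FCO fArity :=
  .con co (fun _ => 0) fun _ _ => .star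

/-- The denotation of the predecessor of a numeral, empty if there is none. -/
def pred (d : Value) : Value :=
  conProj FCO.succ (0 : Fin 1) d

/-- The denotation of the head of a list, empty if there is none. -/
def hd (d : Value) : Value :=
  conProj FCO.cons (0 : Fin 2) d

/-- The denotation of the tail of a list, empty if there is none. -/
def tl (d : Value) : Value :=
  conProj FCO.cons (1 : Fin 2) d

/-- The constructor `S` in the filter model. -/
def succSet (d : Value) : Value :=
  conSet FCO.succ ![d]

/-- The constructor `cons` in the filter model. -/
def consSet (a d : Value) : Value :=
  conSet FCO.cons ![a, d]

/-- The denotation of a constant of MBR. -/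
def mbr (c : MC) : Value :=
  denCst MBR c

variable {a b d f g k m n s t x y : Value} {c : MC} {σ : ITy FCO fArity}

theorem subset_pred_succSet : d ⊆ pred (succSet d) := by
  rcases d.eq_empty_or_nonempty with rfl | hd
  · exact Set.empty_subset _
  · exact subset_conProj_conSet (arity := fArity) (co := .succ) (a := ![d])
      (Fin.forall_fin_one.2 hd) (0 : Fin 1)

theorem subset_hd_consSet (hne : d.Nonempty) : a ⊆ hd (consSet a d) := by
  rcases a.eq_empty_or_nonempty with rfl | ha
  · exact Set.empty_subset _
  · exact subset_conProj_conSet (arity := fArity) (co := .cons) (a := ![a, d])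
      (Fin.forall_fin_two.2 ⟨ha, hne⟩) (0 : Fin 2)

theorem subset_tl_consSet (ha : a.Nonempty) : d ⊆ tl (consSet a d) := by
  rcases d.eq_empty_or_nonempty with rfl | hd
  · exact Set.empty_subset _
  · exact subset_conProj_conSet (arity := fArity) (co := .cons) (a := ![a, d])
      (Fin.forall_fin_two.2 ⟨ha, hd⟩) (1 : Fin 2)

variable {C : Type} {R : Set (Rule FCO fArity C)} {η : ℕ → Value}

theorem atom_mem_conSet {co : FCO} (h : fArity co = 0) (u : Fin (fArity co) → Value) :
    ITy.atom co ∈ conSet co u :=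
  ⟨_, _, rfl, fun i => (h ▸ i).elim0⟩

theorem atom_tt_mem_den_tmT : .atom .tt ∈ den R η tmT :=
  den_con (R := R) η .tt _ ▸ atom_mem_conSet rfl _

theorem atom_ff_mem_den_tmF : .atom .ff ∈ den R η tmF :=
  den_con (R := R) η .ff _ ▸ atom_mem_conSet rfl _

theorem atom_zero_mem_den_tmZero : .atom .zero ∈ den R η tmZero :=
  den_con (R := R) η .zero _ ▸ atom_mem_conSet rfl _

theorem den_tmNil : den R η tmNil = conSet FCO.nil ![] :=
  (den_con η FCO.nil ![]).trans <| congrArg (conSet FCO.nil) <| funext fun i : Fin 0 => i.elim0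

theorem den_tmSucc (M : Tm FCO fArity C) : den R η (tmSucc M) = succSet (den R η M) :=
  (den_con η FCO.succ ![M]).trans <| congrArg (conSet FCO.succ) <|
    funext (Fin.forall_fin_one.2 rfl : ∀ i : Fin 1, den R η (![M] i) = ![den R η M] i)

theorem den_tmCons (M N : Tm FCO fArity C) :
    den R η (tmCons M N) = consSet (den R η M) (den R η N) :=
  (den_con η FCO.cons ![M, N]).trans <| congrArg (conSet FCO.cons) <|
    funext (Fin.forall_fin_two.2 ⟨rfl, rfl⟩ :
      ∀ i : Fin 2, den R η (![M, N] i) = ![den R η M, den R η N] i)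

theorem env_pT (z : ℕ) : pT.env b z = ∅ :=
  Set.iUnion_of_empty (ι := Fin 0) _

theorem env_pF (z : ℕ) : pF.env b z = ∅ :=
  Set.iUnion_of_empty (ι := Fin 0) _

theorem env_pZero (z : ℕ) : pZero.env n z = ∅ :=
  Set.iUnion_of_empty (ι := Fin 0) _

theorem env_pNil (z : ℕ) : pNil.env s z = ∅ :=
  Set.iUnion_of_empty (ι := Fin 0) _

theorem env_pSucc (P : Pat FCO fArity) (z : ℕ) : (pSucc P).env n z = P.env (pred n) z :=
  Set.ext fun _ => Set.mem_iUnion.trans Fin.exists_fin_one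

theorem env_pCons (P Q : Pat FCO fArity) (z : ℕ) :
    (pCons P Q).env s z = P.env (hd s) z ∪ Q.env (tl s) z :=
  Set.ext fun _ => Set.mem_iUnion.trans Fin.exists_fin_two

theorem mem_mbr_foldl {As : List Value} (hne : ∀ A ∈ As, A.Nonempty)
    (hrules : ∀ r ∈ mbrList, r.head = c → r.pats.length = As.length ∧
      (ClashList r.pats As ∨ σ ∈ den MBR (envList r.pats As) r.rhs)) :
    σ ∈ As.foldl appSet (mbr c) :=
  mem_denCst_foldl (mbrList.finite_toSet.subset fun _ h => h.1) hne
    (fun r hr hc => (hrules r hr hc).1) fun r hr hc => (hrules r hr hc).2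

theorem mbr_if_tt (hb : .atom .tt ∈ b) (hy : y.Nonempty) : x ⊆ mbr .cif ⬝ b ⬝ x ⬝ y := by
  intro σ hσ
  have hF : pF.Clash b := Pat.clash_of_con_mem hb (by decide)
  refine mem_mbr_foldl (As := [b, x, y]) (by simpa using ⟨⟨_, hb⟩, ⟨_, hσ⟩, hy⟩) ?_
  simp [mbrList, ClashList, envList, Pat.env, den_var, env_pT, hF, hσ]

theorem mbr_if_ff (hb : .atom .ff ∈ b) (hx : x.Nonempty) : y ⊆ mbr .cif ⬝ b ⬝ x ⬝ y := by
  intro σ hσ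
  have hT : pT.Clash b := Pat.clash_of_con_mem hb (by decide)
  refine mem_mbr_foldl (As := [b, x, y]) (by simpa using ⟨⟨_, hb⟩, hx, ⟨_, hσ⟩⟩) ?_
  simp [mbrList, ClashList, envList, Pat.env, den_var, env_pF, hT, hσ]

theorem star_mem_mbr_if (hb : .star ∈ b) (hx : x.Nonempty) (hy : y.Nonempty) :
    .star ∈ mbr .cif ⬝ b ⬝ x ⬝ y := by
  have hT : pT.Clash b := Pat.clash_of_star_mem hb
  have hF : pF.Clash b := Pat.clash_of_star_mem hb
  refine mem_mbr_foldl (As := [b, x, y]) (by simpa using ⟨⟨_, hb⟩, hx, hy⟩) ?_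
  simp [mbrList, ClashList, hT, hF]

theorem ff_mem_mbr_lt_zero (hn : n.Nonempty) (hm : .atom .zero ∈ m) :
    .atom .ff ∈ mbr .clt ⬝ n ⬝ m := by
  have hS (P : Pat FCO fArity) : (pSucc P).Clash m := Pat.clash_of_con_mem hm (by decide)
  refine mem_mbr_foldl (As := [n, m]) (by simpa using ⟨hn, ⟨_, hm⟩⟩) ?_
  simp [mbrList, ClashList, hS, atom_ff_mem_den_tmF]

theorem tt_mem_mbr_zero_lt (hn : .atom .zero ∈ n) (hm : (pred m).Nonempty) :
    .atom .tt ∈ mbr .clt ⬝ n ⬝ m := by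
  have hS (P : Pat FCO fArity) : (pSucc P).Clash n := Pat.clash_of_con_mem hn (by decide)
  have hZ : pZero.Clash m := Pat.clash_of_conProj_nonempty hm (by decide)
  refine mem_mbr_foldl (As := [n, m])
    (by simpa using ⟨⟨_, hn⟩, nonempty_of_conProj_nonempty hm⟩) ?_
  simp [mbrList, ClashList, hS, hZ, atom_tt_mem_den_tmT]

theorem mbr_succ_lt_succ (hn : (pred n).Nonempty) (hm : (pred m).Nonempty) :
    mbr .clt ⬝ pred n ⬝ pred m ⊆ mbr .clt ⬝ n ⬝ m := by
  intro σ hσ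
  have hnZ : pZero.Clash n := Pat.clash_of_conProj_nonempty hn (by decide)
  have hmZ : pZero.Clash m := Pat.clash_of_conProj_nonempty hm (by decide)
  refine mem_mbr_foldl (As := [n, m])
    (by simpa using ⟨nonempty_of_conProj_nonempty hn, nonempty_of_conProj_nonempty hm⟩) ?_
  simpa [mbrList, ClashList, envList, Pat.env, app2, den_app, den_var, den_cst, env_pSucc, hnZ, hmZ]
    using .inr hσ

theorem star_mem_mbr_star_lt (hn : .star ∈ n) (hm : (pred m).Nonempty) :
    .star ∈ mbr .clt ⬝ n ⬝ m := by
  have hnS (P : Pat FCO fArity) : (pSucc P).Clash n := Pat.clash_of_star_mem hn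
  have hnZ : pZero.Clash n := Pat.clash_of_star_mem hn
  have hmZ : pZero.Clash m := Pat.clash_of_conProj_nonempty hm (by decide)
  refine mem_mbr_foldl (As := [n, m])
    (by simpa using ⟨⟨_, hn⟩, nonempty_of_conProj_nonempty hm⟩) ?_
  simp [mbrList, ClashList, hnS, hnZ, hmZ]

theorem star_mem_mbr_lt_star (hn : n.Nonempty) (hm : .star ∈ m) :
    .star ∈ mbr .clt ⬝ n ⬝ m := by
  have hS (P : Pat FCO fArity) : (pSucc P).Clash m := Pat.clash_of_star_mem hm
  have hZ : pZero.Clash m := Pat.clash_of_star_mem hm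
  refine mem_mbr_foldl (As := [n, m]) (by simpa using ⟨hn, ⟨_, hm⟩⟩) ?_
  simp [mbrList, ClashList, hS, hZ]

theorem zero_mem_mbr_lh_nil (hs : .atom .nil ∈ s) : .atom .zero ∈ mbr .clh ⬝ s := by
  have hC (P Q : Pat FCO fArity) : (pCons P Q).Clash s := Pat.clash_of_con_mem hs (by decide)
  refine mem_mbr_foldl (As := [s]) (by simpa using ⟨_, hs⟩) ?_
  simp [mbrList, ClashList, hC, atom_zero_mem_den_tmZero]

theorem mbr_lh_cons (hs : (tl s).Nonempty) : mbr .clh ⬝ tl s ⊆ pred (mbr .clh ⬝ s) := by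
  have hN : pNil.Clash s := Pat.clash_of_conProj_nonempty hs (by decide)
  have : succSet (mbr .clh ⬝ tl s) ⊆ mbr .clh ⬝ s := by
    intro σ hσ
    refine mem_mbr_foldl (As := [s]) (by simpa using nonempty_of_conProj_nonempty hs) ?_
    simpa [mbrList, ClashList, envList, Pat.env, den_tmSucc, den_app, den_var, den_cst, env_pCons,
      hN] using .inr hσ
  exact subset_pred_succSet.trans (conProj_mono this)

theorem star_mem_mbr_lh (hs : .star ∈ s) : .star ∈ mbr .clh ⬝ s := by
  have hN : pNil.Clash s := Pat.clash_of_star_mem hs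
  have hC (P Q : Pat FCO fArity) : (pCons P Q).Clash s := Pat.clash_of_star_mem hs
  refine mem_mbr_foldl (As := [s]) (by simpa using ⟨_, hs⟩) ?_
  simp [mbrList, ClashList, hN, hC]

theorem mbr_get_zero (hn : .atom .zero ∈ n) : hd s ⊆ mbr .cget ⬝ s ⬝ n := by
  intro σ hσ
  have hS (P : Pat FCO fArity) : (pSucc P).Clash n := Pat.clash_of_con_mem hn (by decide)
  refine mem_mbr_foldl (As := [s, n])
    (by simpa using ⟨nonempty_of_conProj_nonempty ⟨_, hσ⟩, ⟨_, hn⟩⟩) ?_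
  simp [mbrList, ClashList, envList, Pat.env, den_var, env_pCons, env_pZero, hS, hσ]

theorem mbr_get_succ (hs : (tl s).Nonempty) (hn : (pred n).Nonempty) :
    mbr .cget ⬝ tl s ⬝ pred n ⊆ mbr .cget ⬝ s ⬝ n := by
  intro σ hσ
  have hZ : pZero.Clash n := Pat.clash_of_conProj_nonempty hn (by decide)
  refine mem_mbr_foldl (As := [s, n])
    (by simpa using ⟨nonempty_of_conProj_nonempty hs, nonempty_of_conProj_nonempty hn⟩) ?_
  simpa [mbrList, ClashList, envList, Pat.env, app2, den_app, den_var, den_cst, env_pCons,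
    env_pSucc, hZ] using .inr hσ

theorem star_mem_mbr_get_left (hs : .atom .nil ∈ s ∨ .star ∈ s) (hn : n.Nonempty) :
    .star ∈ mbr .cget ⬝ s ⬝ n := by
  have hC (P Q : Pat FCO fArity) : (pCons P Q).Clash s :=
    hs.elim (Pat.clash_of_con_mem · (by decide)) Pat.clash_of_star_mem
  refine mem_mbr_foldl (As := [s, n])
    (by simpa using ⟨hs.elim (⟨_, ·⟩) (⟨_, ·⟩), hn⟩) ?_
  simp [mbrList, ClashList, hC]

theorem star_mem_mbr_get_right (hs : s.Nonempty) (hn : .star ∈ n) :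
    .star ∈ mbr .cget ⬝ s ⬝ n := by
  have hZ : pZero.Clash n := Pat.clash_of_star_mem hn
  have hS (P : Pat FCO fArity) : (pSucc P).Clash n := Pat.clash_of_star_mem hn
  refine mem_mbr_foldl (As := [s, n]) (by simpa using ⟨hs, ⟨_, hn⟩⟩) ?_
  simp [mbrList, ClashList, hZ, hS]

theorem mbr_cat_nil (hs : .atom .nil ∈ s) : t ⊆ mbr .cat ⬝ s ⬝ t := by
  intro σ hσ
  have hC (P Q : Pat FCO fArity) : (pCons P Q).Clash s := Pat.clash_of_con_mem hs (by decide)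
  refine mem_mbr_foldl (As := [s, t]) (by simpa using ⟨⟨_, hs⟩, ⟨_, hσ⟩⟩) ?_
  simp [mbrList, ClashList, envList, Pat.env, den_var, env_pNil, hC, hσ]

theorem mbr_cat_cons (hs : (tl s).Nonempty) (ht : t.Nonempty) :
    consSet (hd s) (mbr .cat ⬝ tl s ⬝ t) ⊆ mbr .cat ⬝ s ⬝ t := by
  intro σ hσ
  have hN : pNil.Clash s := Pat.clash_of_conProj_nonempty hs (by decide)
  refine mem_mbr_foldl (As := [s, t])
    (by simpa using ⟨nonempty_of_conProj_nonempty hs, ht⟩) ?_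
  simpa [mbrList, ClashList, envList, Pat.env, app2, den_tmCons, den_app, den_var, den_cst,
    env_pCons, hN] using .inr hσ

theorem star_mem_mbr_cat (hs : .star ∈ s) (ht : t.Nonempty) : .star ∈ mbr .cat ⬝ s ⬝ t := by
  have hN : pNil.Clash s := Pat.clash_of_star_mem hs
  have hC (P Q : Pat FCO fArity) : (pCons P Q).Clash s := Pat.clash_of_star_mem hs
  refine mem_mbr_foldl (As := [s, t]) (by simpa using ⟨⟨_, hs⟩, ht⟩) ?_
  simp [mbrList, ClashList, hN, hC]

theorem mbr_rec_zero (hf : f.Nonempty) (hn : .atom .zero ∈ n) :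
    x ⊆ mbr .crec ⬝ x ⬝ f ⬝ n := by
  intro σ hσ
  have hS (P : Pat FCO fArity) : (pSucc P).Clash n := Pat.clash_of_con_mem hn (by decide)
  refine mem_mbr_foldl (As := [x, f, n]) (by simpa using ⟨⟨_, hσ⟩, hf, ⟨_, hn⟩⟩) ?_
  simp [mbrList, ClashList, envList, Pat.env, den_var, env_pZero, hS, hσ]

theorem mbr_rec_succ (hx : x.Nonempty) (hf : f.Nonempty) (hn : (pred n).Nonempty) :
    f ⬝ pred n ⬝ (mbr .crec ⬝ x ⬝ f ⬝ pred n) ⊆ mbr .crec ⬝ x ⬝ f ⬝ n := by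
  intro σ hσ
  have hZ : pZero.Clash n := Pat.clash_of_conProj_nonempty hn (by decide)
  refine mem_mbr_foldl (As := [x, f, n])
    (by simpa using ⟨hx, hf, nonempty_of_conProj_nonempty hn⟩) ?_
  simpa [mbrList, ClashList, envList, Pat.env, app2, app3, den_app, den_var, den_cst,
    env_pSucc, hZ] using .inr hσ

theorem star_mem_mbr_rec (hx : x.Nonempty) (hf : f.Nonempty) (hn : .star ∈ n) :
    .star ∈ mbr .crec ⬝ x ⬝ f ⬝ n := by
  have hZ : pZero.Clash n := Pat.clash_of_star_mem hn
  have hS (P : Pat FCO fArity) : (pSucc P).Clash n := Pat.clash_of_star_mem hn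
  refine mem_mbr_foldl (As := [x, f, n]) (by simpa using ⟨hx, hf, ⟨_, hn⟩⟩) ?_
  simp [mbrList, ClashList, hZ, hS]

/-- The denotation of the argument `λk. Ψ y g s k (k < lh s)` of `y` in the rule for `Φ`. -/
def phiArg (y g s : Value) : Value :=
  den MBR (envList [.pvar 0, .pvar 1, .pvar 2] [y, g, s])
    (.lam 3 (app2 (app3 (.cst .cpsi) (.var 0) (.var 1) (.var 2)) (.var 3)
      (app2 (.cst .clt) (.var 3) (.app (.cst .clh) (.var 2)))))

/-- The denotation of the argument `λx. Φ y g (s ++ cons(x, nil))` of `g` in the rule for `Ψ`. -/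
def psiArg (y g s k : Value) : Value :=
  den MBR (envList [.pvar 0, .pvar 1, .pvar 2, .pvar 3] [y, g, s, k])
    (.lam 4 (app3 (.cst .cphi) (.var 0) (.var 1)
      (app2 (.cst .cat) (.var 2) (tmCons (.var 4) tmNil))))

/-- The denotation of the one-element list `cons(a, nil)`. -/
def singletonSet (a : Value) : Value :=
  consSet a (conSet FCO.nil ![])

theorem mbr_phi (hy : y.Nonempty) (hg : g.Nonempty) (hs : s.Nonempty) :
    y ⬝ phiArg y g s ⊆ mbr .cphi ⬝ y ⬝ g ⬝ s := by
  intro σ hσ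
  refine mem_mbr_foldl (As := [y, g, s]) (by simpa using ⟨hy, hg, hs⟩) ?_
  simpa [mbrList, ClashList, Pat.Clash, den_app, den_var, envList, Pat.env, phiArg] using hσ

theorem mbr_psi_tt (hy : y.Nonempty) (hg : g.Nonempty) (hs : s.Nonempty) (hk : k.Nonempty)
    (hb : .atom .tt ∈ b) : mbr .cget ⬝ s ⬝ k ⊆ mbr .cpsi ⬝ y ⬝ g ⬝ s ⬝ k ⬝ b := by
  intro σ hσ
  have hF : pF.Clash b := Pat.clash_of_con_mem hb (by decide)
  refine mem_mbr_foldl (As := [y, g, s, k, b]) (by simpa using ⟨hy, hg, hs, hk, ⟨_, hb⟩⟩) ?_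
  simpa [mbrList, ClashList, envList, Pat.env, app2, den_app, den_var, den_cst, env_pT, hF]
    using .inr hσ

theorem mbr_psi_ff (hy : y.Nonempty) (hg : g.Nonempty) (hs : s.Nonempty) (hk : k.Nonempty)
    (hb : .atom .ff ∈ b) : g ⬝ k ⬝ psiArg y g s k ⊆ mbr .cpsi ⬝ y ⬝ g ⬝ s ⬝ k ⬝ b := by
  intro σ hσ
  have hT : pT.Clash b := Pat.clash_of_con_mem hb (by decide)
  refine mem_mbr_foldl (As := [y, g, s, k, b]) (by simpa using ⟨hy, hg, hs, hk, ⟨_, hb⟩⟩) ?_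
  simpa [mbrList, ClashList, Pat.Clash, envList, Pat.env, app2, den_app, den_var, den_cst, env_pF,
    hT, psiArg] using (Or.inr hσ : pF.Clash b ∨ _)

theorem star_mem_mbr_psi (hy : y.Nonempty) (hg : g.Nonempty) (hs : s.Nonempty) (hk : k.Nonempty)
    (hb : .star ∈ b) : .star ∈ mbr .cpsi ⬝ y ⬝ g ⬝ s ⬝ k ⬝ b := by
  have hT : pT.Clash b := Pat.clash_of_star_mem hb
  have hF : pF.Clash b := Pat.clash_of_star_mem hb
  refine mem_mbr_foldl (As := [y, g, s, k, b]) (by simpa using ⟨hy, hg, hs, hk, ⟨_, hb⟩⟩) ?_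
  simp [mbrList, ClashList, hT, hF]

theorem mbr_psi_subset_phiArg_appSet (hk : k.Nonempty) :
    mbr .cpsi ⬝ y ⬝ g ⬝ s ⬝ k ⬝ (mbr .clt ⬝ k ⬝ (mbr .clh ⬝ s)) ⊆ phiArg y g s ⬝ k := by
  refine subset_trans ?_ (den_subset_den_lam_appSet hk _ _)
  simp [app2, app3, den_app, den_var, den_cst, envList, Pat.env, mbr]

theorem mbr_phi_subset_psiArg_appSet (ha : a.Nonempty) :
    mbr .cphi ⬝ y ⬝ g ⬝ (mbr .cat ⬝ s ⬝ singletonSet a) ⊆ psiArg y g s k ⬝ a := by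
  refine subset_trans ?_ (den_subset_den_lam_appSet ha _ _)
  simp [app2, app3, den_app, den_var, den_cst, den_tmCons, den_tmNil, envList, Pat.env, mbr,
    singletonSet]

end MBREquations

/-! ### Numerals and lists in the filter model -/

section NumeralsAndLists

variable {a d n m s t x y g : Value} {i j : ℕ} {l l' : List Value} {z z' σ : ITy FCO fArity}

theorem arr_mem_phiArg {S : Fin (j + 1) → ITy FCO fArity}
    (h : σ ∈ mbr .cpsi ⬝ y ⬝ g ⬝ s ⬝ Set.range S ⬝ (mbr .clt ⬝ Set.range S ⬝ (mbr .clh ⬝ s))) :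
    .arr j S σ ∈ phiArg y g s := by
  refine Typ.lam (?_ : σ ∈ den MBR _ _)
  simpa [app2, app3, den_app, den_var, den_cst, envList, Pat.env, mbr] using h

theorem pred_iterate_mono (h : d ⊆ n) : pred^[i] d ⊆ pred^[i] n := by
  induction i generalizing d n with
  | zero => exact h
  | succ _ ih => exact ih (conProj_mono h)

theorem nonempty_of_mem_pred_iterate (h : z ∈ pred^[i] n) : n.Nonempty := by
  induction i generalizing n with
  | zero => exact ⟨z, h⟩
  | succ i ih => exact nonempty_of_conProj_nonempty (ih h)

theorem exists_mem_pred_iterate_singleton (h : z ∈ pred^[i] n) : ∃ w ∈ n, z ∈ pred^[i] {w} := by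
  induction i generalizing n with
  | zero => exact ⟨z, h, rfl⟩
  | succ i ih =>
    obtain ⟨w, ⟨k, F, hF, hw⟩, hz⟩ := ih h
    have : {w} ⊆ pred {.con .succ k F} := Set.singleton_subset_iff.2 ⟨k, F, rfl, hw⟩
    exact ⟨_, hF, pred_iterate_mono this hz⟩

theorem mem_mbr_lt_of_lt (hbase : ∀ n m, z ∈ n → (pred m).Nonempty → σ ∈ mbr .clt ⬝ n ⬝ m)
    (hn : z ∈ pred^[i] n) (hm : z' ∈ pred^[j] m) (hij : i < j) : σ ∈ mbr .clt ⬝ n ⬝ m := by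
  induction j generalizing i n m with
  | zero => exact absurd hij (Nat.not_lt_zero i)
  | succ j ih =>
    have hm' : (pred m).Nonempty := nonempty_of_mem_pred_iterate hm
    cases i with
    | zero => exact hbase n m hn hm'
    | succ i =>
      exact mbr_succ_lt_succ (nonempty_of_mem_pred_iterate hn) hm'
        (ih hn hm (Nat.lt_of_succ_lt_succ hij))

theorem mem_mbr_lt_of_le (hbase : ∀ n m, n.Nonempty → z' ∈ m → σ ∈ mbr .clt ⬝ n ⬝ m)
    (hn : z ∈ pred^[i] n) (hm : z' ∈ pred^[j] m) (hji : j ≤ i) : σ ∈ mbr .clt ⬝ n ⬝ m := by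
  induction j generalizing i n m with
  | zero => exact hbase n m (nonempty_of_mem_pred_iterate hn) hm
  | succ j ih =>
    obtain ⟨i, rfl⟩ := Nat.exists_eq_add_of_le' hji
    exact mbr_succ_lt_succ (nonempty_of_mem_pred_iterate (i := i + j) hn)
      (nonempty_of_mem_pred_iterate hm) (ih hn hm (Nat.le_add_left j i))

theorem tt_mem_mbr_lt (hn : .atom .zero ∈ pred^[i] n) (hm : z ∈ pred^[j] m) (hij : i < j) :
    .atom .tt ∈ mbr .clt ⬝ n ⬝ m :=
  mem_mbr_lt_of_lt (fun _ _ => tt_mem_mbr_zero_lt) hn hm hij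

theorem ff_mem_mbr_lt (hn : z ∈ pred^[i] n) (hm : .atom .zero ∈ pred^[j] m) (hji : j ≤ i) :
    .atom .ff ∈ mbr .clt ⬝ n ⬝ m :=
  mem_mbr_lt_of_le (fun _ _ => ff_mem_mbr_lt_zero) hn hm hji

theorem star_mem_mbr_lt_of_lt (hn : .star ∈ pred^[i] n) (hm : z ∈ pred^[j] m) (hij : i < j) :
    .star ∈ mbr .clt ⬝ n ⬝ m :=
  mem_mbr_lt_of_lt (fun _ _ => star_mem_mbr_star_lt) hn hm hij

theorem star_mem_mbr_lt_of_le (hn : z ∈ pred^[i] n) (hm : .star ∈ pred^[j] m) (hji : j ≤ i) :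
    .star ∈ mbr .clt ⬝ n ⬝ m :=
  mem_mbr_lt_of_le (fun _ _ => star_mem_mbr_lt_star) hn hm hji

/-- `s` denotes a list whose entries have at least the types in the members of `l`, and whose
end, `nil` or a stuck term, has the type `z`. -/
def IsList (z : ITy FCO fArity) : List Value → Value → Prop
  | [], s => z ∈ s
  | a :: l, s => a ⊆ hd s ∧ IsList z l (tl s)

theorem IsList.mono (h : IsList z l s) (hst : s ⊆ t) : IsList z l t := by
  induction l generalizing s t with
  | nil => exact hst h
  | cons a l ih => exact ⟨h.1.trans (conProj_mono hst), ih h.2 (conProj_mono hst)⟩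

theorem IsList.nonempty (h : IsList z l s) : s.Nonempty := by
  induction l generalizing s with
  | nil => exact ⟨z, h⟩
  | cons a l ih => exact nonempty_of_conProj_nonempty (ih h.2)

theorem isList_singletonSet (ha : a.Nonempty) : IsList (.atom .nil) [a] (singletonSet a) :=
  have hnil : .atom .nil ∈ conSet FCO.nil ![] := atom_mem_conSet rfl _
  ⟨subset_hd_consSet ⟨_, hnil⟩, subset_tl_consSet ha hnil⟩

theorem IsList.mem_pred_iterate_mbr_lh (hbase : ∀ s, z ∈ s → z' ∈ mbr .clh ⬝ s)
    (h : IsList z l s) : z' ∈ pred^[l.length] (mbr .clh ⬝ s) := by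
  induction l generalizing s with
  | nil => exact hbase s h
  | cons a l ih => exact pred_iterate_mono (mbr_lh_cons h.2.nonempty) (ih h.2)

theorem IsList.subset_mbr_get (h : IsList z l s) (hn : .atom .zero ∈ pred^[i] n)
    (hi : l[i]? = some a) : a ⊆ mbr .cget ⬝ s ⬝ n := by
  induction l generalizing s n i with
  | nil => simp at hi
  | cons b l ih =>
    cases i with
    | zero =>
      obtain rfl : b = a := by simpa using hi
      exact h.1.trans (mbr_get_zero hn)
    | succ i =>
      exact (ih h.2 (i := i) hn (by simpa using hi)).trans
        (mbr_get_succ h.2.nonempty (nonempty_of_mem_pred_iterate hn))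

theorem IsList.star_mem_mbr_get
    (hbase : ∀ s n, z ∈ s → n.Nonempty → .star ∈ mbr .cget ⬝ s ⬝ n) (h : IsList z l s)
    (hn : z' ∈ pred^[i] n) (hi : z' = .star ∨ l.length ≤ i) : .star ∈ mbr .cget ⬝ s ⬝ n := by
  induction i generalizing l s n with
  | zero =>
    rcases hi with rfl | hi
    · exact star_mem_mbr_get_right h.nonempty hn
    · obtain rfl : l = [] := List.length_eq_zero_iff.1 (Nat.le_zero.1 hi)
      exact hbase s n h ⟨_, hn⟩
  | succ i ih =>
    cases l with
    | nil => exact hbase s n h (nonempty_of_mem_pred_iterate hn)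
    | cons a l =>
      exact mbr_get_succ h.2.nonempty (nonempty_of_mem_pred_iterate hn)
        (ih h.2 hn (hi.imp_right Nat.le_of_succ_le_succ))

theorem IsList.cons_mbr_cat (h : a ⊆ hd s) (hs : (hd s).Nonempty) (htl : (tl s).Nonempty)
    (ht : t.Nonempty) (hl : IsList z l (mbr .cat ⬝ tl s ⬝ t)) :
    IsList z (a :: l) (mbr .cat ⬝ s ⬝ t) :=
  have hcat := mbr_cat_cons htl ht
  ⟨h.trans ((subset_hd_consSet hl.nonempty).trans (conProj_mono hcat)),
    hl.mono ((subset_tl_consSet hs).trans (conProj_mono hcat))⟩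

theorem IsList.mbr_cat (h : IsList (.atom .nil) l s) (h' : IsList z l' t) :
    IsList z (l ++ l') (mbr .cat ⬝ s ⬝ t) := by
  induction l generalizing s with
  | nil => exact h'.mono (mbr_cat_nil h)
  | cons a l ih =>
    exact cons_mbr_cat h.1 (conProj_nonempty h.2.nonempty) h.2.nonempty h'.nonempty (ih h.2)

theorem IsList.star_mbr_cat (h : IsList .star l s) (ht : t.Nonempty) :
    IsList .star l (mbr .cat ⬝ s ⬝ t) := by
  induction l generalizing s with
  | nil => exact star_mem_mbr_cat h ht
  | cons a l ih =>
    exact cons_mbr_cat h.1 (conProj_nonempty h.2.nonempty) h.2.nonempty ht (ih h.2)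

end NumeralsAndLists

/-! ### Candidates -/

section Candidates

variable {A B : Set Value} {d : Value}

/-- A set of values that may interpret a type of system F. -/
structure IsCandidate (A : Set Value) : Prop where
  mem_of_subset {d d' : Value} : d ∈ A → d ⊆ d' → d' ∈ A
  mem_of_star_mem {d : Value} : .star ∈ d → d ∈ A
  nonempty {d : Value} : d ∈ A → d.Nonempty

/-- The candidate interpreting the type of booleans. -/
def boolCand : Set Value :=
  {b | .atom .tt ∈ b ∨ .atom .ff ∈ b ∨ .star ∈ b}

/-- The candidate interpreting the type of natural numbers: finitely many successors applied to
zero or to a stuck term. -/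
def natCand : Set Value :=
  {n | ∃ i, .atom .zero ∈ pred^[i] n ∨ .star ∈ pred^[i] n}

/-- The candidate interpreting lists over a type interpreted by `A`. -/
def listCand (A : Set Value) : Set Value :=
  {s | ∃ l, (∀ a ∈ l, a ∈ A) ∧ (IsList (.atom .nil) l s ∨ IsList .star l s)}

/-- The candidate interpreting function types. -/
def arrCand (A B : Set Value) : Set Value :=
  {d | ∀ a ∈ A, d ⬝ a ∈ B}

theorem isCandidate_boolCand : IsCandidate boolCand where
  mem_of_subset h hd := h.imp (hd ·) (Or.imp (hd ·) (hd ·))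
  mem_of_star_mem h := .inr (.inr h)
  nonempty h := h.elim (⟨_, ·⟩) fun h => h.elim (⟨_, ·⟩) (⟨_, ·⟩)

theorem isCandidate_natCand : IsCandidate natCand where
  mem_of_subset := fun ⟨i, h⟩ hd =>
    ⟨i, h.imp (pred_iterate_mono hd ·) (pred_iterate_mono hd ·)⟩
  mem_of_star_mem h := ⟨0, .inr h⟩
  nonempty := fun ⟨_, h⟩ => h.elim nonempty_of_mem_pred_iterate nonempty_of_mem_pred_iterate

theorem isCandidate_listCand (A : Set Value) : IsCandidate (listCand A) where
  mem_of_subset := fun ⟨l, hl, h⟩ hd => ⟨l, hl, h.imp (·.mono hd) (·.mono hd)⟩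
  mem_of_star_mem h := ⟨[], fun _ ha => absurd ha List.not_mem_nil, .inr h⟩
  nonempty := fun ⟨_, _, h⟩ => h.elim IsList.nonempty IsList.nonempty

theorem isCandidate_arrCand (hA : IsCandidate A) (hB : IsCandidate B) :
    IsCandidate (arrCand A B) where
  mem_of_subset h hd a ha := hB.mem_of_subset (h a ha) (appSet_mono hd subset_rfl)
  mem_of_star_mem h _ ha := hB.mem_of_star_mem (.inr ⟨rfl, h, hA.nonempty ha⟩)
  nonempty h := by
    obtain ⟨_, ⟨_, _, hd, _⟩ | ⟨_, hd, _⟩⟩ := hB.nonempty (h {.star} (hA.mem_of_star_mem rfl))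
    exacts [⟨_, hd⟩, ⟨_, hd⟩]

theorem natCand_induction {P : Value → Prop} (hzero : ∀ n, .atom .zero ∈ n → P n)
    (hstar : ∀ n, .star ∈ n → P n) (hsucc : ∀ n, pred n ∈ natCand → P (pred n) → P n)
    {n : Value} (hn : n ∈ natCand) : P n := by
  obtain ⟨i, hi⟩ := hn
  induction i generalizing n with
  | zero => exact hi.elim (hzero n) (hstar n)
  | succ i ih => exact hsucc n ⟨i, hi⟩ (ih hi)

theorem exists_singleton_mem_natCand (hd : d ∈ natCand) : ∃ w ∈ d, {w} ∈ natCand := by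
  obtain ⟨i, hi | hi⟩ := hd <;> obtain ⟨w, hw, hi⟩ := exists_mem_pred_iterate_singleton hi
  exacts [⟨w, hw, i, .inl hi⟩, ⟨w, hw, i, .inr hi⟩]

end Candidates

/-! ### The constants of MBR other than bar recursion -/

section Constants

variable {A : Set Value} {a : Value}

theorem mbr_if_mem (hA : IsCandidate A) :
    mbr .cif ∈ arrCand boolCand (arrCand A (arrCand A A)) := by
  intro b hb x hx y hy
  have hxne := hA.nonempty hx
  have hyne := hA.nonempty hy
  rcases hb with hb | hb | hb
  · exact hA.mem_of_subset hx (mbr_if_tt hb hyne)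
  · exact hA.mem_of_subset hy (mbr_if_ff hb hxne)
  · exact hA.mem_of_star_mem (star_mem_mbr_if hb hxne hyne)

theorem mbr_lt_mem : mbr .clt ∈ arrCand natCand (arrCand natCand boolCand) := by
  rintro n ⟨i, hn⟩ m ⟨j, hm⟩
  rcases lt_or_ge i j with hij | hji
  · obtain ⟨z, hm⟩ : (pred^[j] m).Nonempty := hm.elim (⟨_, ·⟩) (⟨_, ·⟩)
    exact hn.imp (tt_mem_mbr_lt · hm hij) fun hn => .inr (star_mem_mbr_lt_of_lt hn hm hij)
  · obtain ⟨z, hn⟩ : (pred^[i] n).Nonempty := hn.elim (⟨_, ·⟩) (⟨_, ·⟩)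
    exact .inr (hm.imp (ff_mem_mbr_lt hn · hji) (star_mem_mbr_lt_of_le hn · hji))

theorem mbr_lh_mem : mbr .clh ∈ arrCand (listCand A) natCand := fun _ ⟨l, _, h⟩ =>
  ⟨l.length, h.imp (·.mem_pred_iterate_mbr_lh fun _ => zero_mem_mbr_lh_nil)
    (·.mem_pred_iterate_mbr_lh fun _ => star_mem_mbr_lh)⟩

theorem mbr_get_mem (hA : IsCandidate A) :
    mbr .cget ∈ arrCand (listCand A) (arrCand natCand A) := by
  rintro s ⟨l, hl, hs⟩ n ⟨i, hn⟩
  have hstar {z' : ITy FCO fArity} (hn : z' ∈ pred^[i] n) (hi : z' = .star ∨ l.length ≤ i) :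
      mbr .cget ⬝ s ⬝ n ∈ A :=
    hA.mem_of_star_mem <| hs.elim
      (·.star_mem_mbr_get (fun _ _ h => star_mem_mbr_get_left (.inl h)) hn hi)
      (·.star_mem_mbr_get (fun _ _ h => star_mem_mbr_get_left (.inr h)) hn hi)
  rcases hn with hn | hn
  · rcases lt_or_ge i l.length with hi | hi
    · have hget := List.getElem?_eq_getElem hi
      exact hA.mem_of_subset (hl _ (List.getElem_mem hi))
        (hs.elim (·.subset_mbr_get hn hget) (·.subset_mbr_get hn hget))
    · exact hstar hn (.inr hi)
  · exact hstar hn (.inl rfl)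

theorem mbr_cat_mem : mbr .cat ∈ arrCand (listCand A) (arrCand (listCand A) (listCand A)) := by
  rintro s ⟨l, hl, hs | hs⟩ t ht
  · obtain ⟨l', hl', ht⟩ := ht
    exact ⟨l ++ l', List.forall_mem_append.2 ⟨hl, hl'⟩, ht.imp hs.mbr_cat hs.mbr_cat⟩
  · exact ⟨l, hl, .inr (hs.star_mbr_cat ((isCandidate_listCand A).nonempty ht))⟩

theorem mbr_rec_mem (hA : IsCandidate A) :
    mbr .crec ∈ arrCand A (arrCand (arrCand natCand (arrCand A A)) (arrCand natCand A)) := by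
  intro x hx f hf n hn
  have hxne := hA.nonempty hx
  have hfne := (isCandidate_arrCand isCandidate_natCand (isCandidate_arrCand hA hA)).nonempty hf
  exact natCand_induction (P := fun n => mbr .crec ⬝ x ⬝ f ⬝ n ∈ A)
    (fun n hn => hA.mem_of_subset hx (mbr_rec_zero hfne hn))
    (fun n hn => hA.mem_of_star_mem (star_mem_mbr_rec hxne hfne hn))
    (fun n hn ih => hA.mem_of_subset (hf _ hn _ ih)
      (mbr_rec_succ hxne hfne (isCandidate_natCand.nonempty hn))) hn

theorem singletonSet_mem_listCand (ha : a ∈ A) (hne : a.Nonempty) :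
    singletonSet a ∈ listCand A :=
  ⟨[a], List.forall_mem_singleton.2 ha, .inl (isList_singletonSet hne)⟩

end Constants

/-! ### Modified bar recursion -/

theorem exists_getElem?_eq_of_append_singleton {α : Type*} {L : ℕ → List α}
    (hL : ∀ m, ∃ a, L (m + 1) = L m ++ [a]) :
    ∃ u : ℕ → α, ∀ i m, i < m → (L m)[i]? = some (u i) := by
  have hlen (m : ℕ) : m ≤ (L m).length := by
    induction m with
    | zero => exact Nat.zero_le _
    | succ m ih =>
      obtain ⟨a, ha⟩ := hL m
      simpa [ha] using ih
  have hmono {m k : ℕ} (h : m ≤ k) : L m <+: L k :=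
    Nat.rel_of_forall_rel_succ_of_le (· <+: ·) (fun m => (hL m).elim fun a ha => ⟨[a], ha.symm⟩) h
  refine ⟨fun i => (L (i + 1))[i]'(hlen (i + 1)), fun i m him => ?_⟩
  exact List.getElem?_eq_some_iff.2
    ⟨him.trans_le (hlen m), ((hmono him).getElem (hlen (i + 1))).symm⟩

/-- The arguments `y` and `g` of `Φ` and `Ψ` at a candidate `A`. -/
structure BarArgs (A : Set Value) (y g : Value) : Prop where
  cand : IsCandidate A
  functional : y ∈ arrCand (arrCand natCand A) natCand
  step : g ∈ arrCand natCand (arrCand (arrCand A natCand) A)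

theorem IsList.subset_mbr_psi {a n s y g : Value} {l : List Value} {z z' : ITy FCO fArity} {i : ℕ}
    (hs : IsList z l s) (hlh : z' ∈ pred^[l.length] (mbr .clh ⬝ s)) (hy : y.Nonempty)
    (hg : g.Nonempty) (hn : .atom .zero ∈ pred^[i] n) (hi : l[i]? = some a) :
    a ⊆ mbr .cpsi ⬝ y ⬝ g ⬝ s ⬝ n ⬝ (mbr .clt ⬝ n ⬝ (mbr .clh ⬝ s)) := by
  have hlt : i < l.length := (List.getElem?_eq_some_iff.1 hi).1
  exact (hs.subset_mbr_get hn hi).trans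
    (mbr_psi_tt hy hg hs.nonempty (nonempty_of_mem_pred_iterate hn) (tt_mem_mbr_lt hn hlh hlt))

namespace BarArgs

open Filter

variable {A : Set Value} {b k s y g : Value} {l : List Value}

theorem functional_nonempty (h : BarArgs A y g) : y.Nonempty :=
  (isCandidate_arrCand (isCandidate_arrCand isCandidate_natCand h.cand)
    isCandidate_natCand).nonempty h.functional

theorem step_nonempty (h : BarArgs A y g) : g.Nonempty :=
  (isCandidate_arrCand isCandidate_natCand
    (isCandidate_arrCand (isCandidate_arrCand h.cand isCandidate_natCand) h.cand)).nonempty h.step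

theorem mbr_phi_mem_of_psi_mem (h : BarArgs A y g) (hs : s.Nonempty)
    (hpsi : ∀ n ∈ natCand,
      mbr .cpsi ⬝ y ⬝ g ⬝ s ⬝ n ⬝ (mbr .clt ⬝ n ⬝ (mbr .clh ⬝ s)) ∈ A) :
    mbr .cphi ⬝ y ⬝ g ⬝ s ∈ natCand := by
  have harg : phiArg y g s ∈ arrCand natCand A := fun n hn =>
    h.cand.mem_of_subset (hpsi n hn)
      (mbr_psi_subset_phiArg_appSet (isCandidate_natCand.nonempty hn))
  exact isCandidate_natCand.mem_of_subset (h.functional _ harg)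
    (mbr_phi h.functional_nonempty h.step_nonempty hs)

theorem mbr_psi_mem_of_phi_mem (h : BarArgs A y g) (hs : s ∈ listCand A) (hk : k ∈ natCand)
    (hb : b ∈ boolCand)
    (hphi : ∀ a ∈ A, mbr .cphi ⬝ y ⬝ g ⬝ (mbr .cat ⬝ s ⬝ singletonSet a) ∈ natCand) :
    mbr .cpsi ⬝ y ⬝ g ⬝ s ⬝ k ⬝ b ∈ A := by
  have hy := h.functional_nonempty
  have hg := h.step_nonempty
  have hsne := (isCandidate_listCand A).nonempty hs
  have hkne := isCandidate_natCand.nonempty hk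
  rcases hb with hb | hb | hb
  · exact h.cand.mem_of_subset (mbr_get_mem h.cand s hs k hk) (mbr_psi_tt hy hg hsne hkne hb)
  · have harg : psiArg y g s k ∈ arrCand A natCand := fun a ha =>
      isCandidate_natCand.mem_of_subset (hphi a ha)
        (mbr_phi_subset_psiArg_appSet (h.cand.nonempty ha))
    exact h.cand.mem_of_subset (h.step k hk _ harg) (mbr_psi_ff hy hg hsne hkne hb)
  · exact h.cand.mem_of_star_mem (star_mem_mbr_psi hy hg hsne hkne hb)

theorem exists_mbr_phi_append_notMem (h : BarArgs A y g) (hs : s ∈ listCand A)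
    (hphi : mbr .cphi ⬝ y ⬝ g ⬝ s ∉ natCand) :
    ∃ a ∈ A, mbr .cphi ⬝ y ⬝ g ⬝ (mbr .cat ⬝ s ⬝ singletonSet a) ∉ natCand := by
  by_contra! hall
  exact hphi <| h.mbr_phi_mem_of_psi_mem ((isCandidate_listCand A).nonempty hs) fun n hn =>
    h.mbr_psi_mem_of_phi_mem hs hn (mbr_lt_mem n hn _ (mbr_lh_mem s hs)) hall

theorem mbr_phi_mem_of_isList_star (h : BarArgs A y g) (hl : ∀ a ∈ l, a ∈ A)
    (hs : IsList .star l s) : mbr .cphi ⬝ y ⬝ g ⬝ s ∈ natCand := by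
  refine h.mbr_phi_mem_of_psi_mem hs.nonempty fun n ⟨i, hn⟩ => ?_
  have hlh := hs.mem_pred_iterate_mbr_lh fun _ => star_mem_mbr_lh
  obtain ⟨z, hz⟩ : (pred^[i] n).Nonempty := hn.elim (⟨_, ·⟩) (⟨_, ·⟩)
  have of_star_mem_lt (hlt : .star ∈ mbr .clt ⬝ n ⬝ (mbr .clh ⬝ s)) :
      mbr .cpsi ⬝ y ⬝ g ⬝ s ⬝ n ⬝ (mbr .clt ⬝ n ⬝ (mbr .clh ⬝ s)) ∈ A :=
    h.cand.mem_of_star_mem (star_mem_mbr_psi h.functional_nonempty h.step_nonempty hs.nonempty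
      (nonempty_of_mem_pred_iterate hz) hlt)
  rcases lt_or_ge i l.length with hi | hi
  · rcases hn with hn | hn
    · exact h.cand.mem_of_subset (hl _ (List.getElem_mem hi))
        (hs.subset_mbr_psi hlh h.functional_nonempty h.step_nonempty hn
          (List.getElem?_eq_getElem hi))
    · exact of_star_mem_lt (star_mem_mbr_lt_of_lt hn hlh hi)
  · exact of_star_mem_lt (star_mem_mbr_lt_of_le hz hlh hi)

theorem exists_sequence_mbr_phi_notMem (h : BarArgs A y g) (hl : ∀ a ∈ l, a ∈ A)
    (hs : IsList (.atom .nil) l s) (hphi : mbr .cphi ⬝ y ⬝ g ⬝ s ∉ natCand) :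
    ∃ (s : ℕ → Value) (L : ℕ → List Value) (u : ℕ → Value),
      (∀ m, IsList (.atom .nil) (L m) (s m)) ∧ (∀ m, mbr .cphi ⬝ y ⬝ g ⬝ s m ∉ natCand) ∧
      (∀ i m, i < m → (L m)[i]? = some (u i)) ∧ ∀ i, u i ∈ A := by
  let Bad := {p : Value × List Value // (∀ a ∈ p.2, a ∈ A) ∧ IsList (.atom .nil) p.2 p.1 ∧
    mbr .cphi ⬝ y ⬝ g ⬝ p.1 ∉ natCand}
  have extend (p : Bad) : ∃ q : Bad, ∃ a, q.1.2 = p.1.2 ++ [a] := by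
    obtain ⟨⟨s, l⟩, hl, hs, hphi⟩ := p
    obtain ⟨a, ha, hphi'⟩ := h.exists_mbr_phi_append_notMem ⟨l, hl, .inl hs⟩ hphi
    exact ⟨⟨(mbr .cat ⬝ s ⬝ singletonSet a, l ++ [a]),
      List.forall_mem_append.2 ⟨hl, List.forall_mem_singleton.2 ha⟩,
      hs.mbr_cat (isList_singletonSet (h.cand.nonempty ha)), hphi'⟩, a, rfl⟩
  choose next hnext using extend
  let p : ℕ → Bad := fun m => next^[m] ⟨(s, l), hl, hs, hphi⟩
  have happend (m : ℕ) : ∃ a, (p (m + 1)).1.2 = (p m).1.2 ++ [a] := by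
    simp only [p, Function.iterate_succ_apply']
    exact hnext _
  obtain ⟨u, hu⟩ := exists_getElem?_eq_of_append_singleton (L := fun m => (p m).1.2) happend
  exact ⟨fun m => (p m).1.1, fun m => (p m).1.2, u, fun m => (p m).2.2.1, fun m => (p m).2.2.2,
    hu, fun i => (p (i + 1)).2.1 _ (List.mem_of_getElem? (hu i (i + 1) i.lt_succ_self))⟩

theorem setOf_eventually_mem_phiArg_mem (h : BarArgs A y g) {s : ℕ → Value}
    {L : ℕ → List Value} {u : ℕ → Value} (hs : ∀ m, IsList (.atom .nil) (L m) (s m))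
    (hL : ∀ i m, i < m → (L m)[i]? = some (u i)) (hu : ∀ i, u i ∈ A) :
    {σ | ∀ᶠ m in atTop, σ ∈ phiArg y g (s m)} ∈ arrCand natCand A := by
  intro n hn
  have hy := h.functional_nonempty
  have hg := h.step_nonempty
  have hlh (m : ℕ) := (hs m).mem_pred_iterate_mbr_lh fun _ => zero_mem_mbr_lh_nil
  obtain ⟨w, hw, i, hi⟩ := exists_singleton_mem_natCand hn
  have mem_of_psi {σ : ITy FCO fArity} (hσ : ∀ m, i < m →
      σ ∈ mbr .cpsi ⬝ y ⬝ g ⬝ s m ⬝ {w} ⬝ (mbr .clt ⬝ {w} ⬝ (mbr .clh ⬝ s m))) :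
      σ ∈ {σ | ∀ᶠ m in atTop, σ ∈ phiArg y g (s m)} ⬝ n := by
    refine .inl ⟨0, fun _ => w, (eventually_gt_atTop i).mono fun m hm => arr_mem_phiArg ?_,
      Set.range_subset_iff.2 fun _ => hw⟩
    rw [Set.range_const]
    exact hσ m hm
  rcases hi with hi | hi
  · exact h.cand.mem_of_subset (hu i) fun σ hσ => mem_of_psi fun m hm =>
      (hs m).subset_mbr_psi (hlh m) hy hg hi (hL i m hm) hσ
  · refine h.cand.mem_of_star_mem (mem_of_psi fun m hm => ?_)
    have hlt : i < (L m).length := (List.getElem?_eq_some_iff.1 (hL i m hm)).1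
    exact star_mem_mbr_psi hy hg (hs m).nonempty (Set.singleton_nonempty w)
      (star_mem_mbr_lt_of_lt hi (hlh m) hlt)

/- Bar induction: `y` maps the limit of a bad sequence to a numeral, and by continuity so it does
some approximation. -/
theorem mbr_phi_mem_of_isList_nil (h : BarArgs A y g) (hl : ∀ a ∈ l, a ∈ A)
    (hs : IsList (.atom .nil) l s) : mbr .cphi ⬝ y ⬝ g ⬝ s ∈ natCand := by
  by_contra hphi
  obtain ⟨s, L, u, hs, hbad, hL, hu⟩ := h.exists_sequence_mbr_phi_notMem hl hs hphi
  have hlim := h.functional _ (h.setOf_eventually_mem_phiArg_mem hs hL hu)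
  obtain ⟨σ, hσ, hσnat⟩ := exists_singleton_mem_natCand hlim
  obtain ⟨m, hm⟩ := (eventually_mem_appSet hσ).exists
  have hphi_m : σ ∈ mbr .cphi ⬝ y ⬝ g ⬝ s m :=
    mbr_phi h.functional_nonempty h.step_nonempty (hs m).nonempty hm
  exact hbad m (isCandidate_natCand.mem_of_subset hσnat (Set.singleton_subset_iff.2 hphi_m))

theorem mbr_phi_mem (h : BarArgs A y g) (hs : s ∈ listCand A) :
    mbr .cphi ⬝ y ⬝ g ⬝ s ∈ natCand := by
  obtain ⟨l, hl, hs | hs⟩ := hs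
  exacts [h.mbr_phi_mem_of_isList_nil hl hs, h.mbr_phi_mem_of_isList_star hl hs]

theorem mbr_psi_mem (h : BarArgs A y g) (hs : s ∈ listCand A) (hk : k ∈ natCand)
    (hb : b ∈ boolCand) : mbr .cpsi ⬝ y ⬝ g ⬝ s ⬝ k ⬝ b ∈ A :=
  h.mbr_psi_mem_of_phi_mem hs hk hb fun _ ha =>
    h.mbr_phi_mem (mbr_cat_mem s hs _ (singletonSet_mem_listCand ha (h.cand.nonempty ha)))

end BarArgs

/-! ### Soundness of typing -/

section Soundness

/-- The interpretation of the types of system F by candidates. -/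
def candSem : FTy → (ℕ → Set Value) → Set Value
  | .tvar p, τ => τ p
  | .boole, _ => boolCand
  | .nat, _ => natCand
  | .list ρ, τ => listCand (candSem ρ τ)
  | .arr ρ σ, τ => arrCand (candSem ρ τ) (candSem σ τ)
  | .all p ρ, τ => {d | ∀ A, IsCandidate A → d ∈ candSem ρ (Function.update τ p A)}

variable {τ τ' : ℕ → Set Value}

theorem isCandidate_update (hτ : ∀ p, IsCandidate (τ p)) {A : Set Value} (hA : IsCandidate A)
    (p : ℕ) : ∀ q, IsCandidate (Function.update τ p A q) :=
  (Function.forall_update_iff τ fun _ B => IsCandidate B).2 ⟨hA, fun q _ => hτ q⟩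

theorem isCandidate_candSem (ρ : FTy) (hτ : ∀ p, IsCandidate (τ p)) :
    IsCandidate (candSem ρ τ) := by
  induction ρ generalizing τ with
  | tvar p => exact hτ p
  | boole => exact isCandidate_boolCand
  | nat => exact isCandidate_natCand
  | list ρ => exact isCandidate_listCand _
  | arr ρ σ ihρ ihσ => exact isCandidate_arrCand (ihρ hτ) (ihσ hτ)
  | all p ρ ih =>
    have ih {A : Set Value} (hA : IsCandidate A) := ih (isCandidate_update hτ hA p)
    exact
      { mem_of_subset := fun hd hdd' A hA => (ih hA).mem_of_subset (hd A hA) hdd'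
        mem_of_star_mem := fun hd A hA => (ih hA).mem_of_star_mem hd
        nonempty := fun hd => (ih isCandidate_boolCand).nonempty (hd _ isCandidate_boolCand) }

theorem candSem_congr {ρ : FTy} (h : ∀ p ∈ ftv ρ, τ p = τ' p) : candSem ρ τ = candSem ρ τ' := by
  induction ρ generalizing τ τ' with
  | tvar p => exact h p (Finset.mem_singleton_self p)
  | boole => rfl
  | nat => rfl
  | list ρ ih => simp only [candSem, ih h]
  | arr ρ σ ihρ ihσ =>
    simp only [candSem, ihρ fun p hp => h p (Finset.mem_union_left _ hp),
      ihσ fun p hp => h p (Finset.mem_union_right _ hp)]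
  | all p ρ ih =>
    have (A : Set Value) :
        candSem ρ (Function.update τ p A) = candSem ρ (Function.update τ' p A) := by
      refine ih fun q hq => ?_
      rcases eq_or_ne q p with rfl | hqp
      · simp
      · simp [hqp, h q (by simp [ftv, hq, hqp])]
    simp only [candSem, this]

theorem candSem_tsubst (ρ : FTy) (θ : ℕ → FTy) (τ : ℕ → Set Value) :
    candSem (tsubst ρ θ) τ = candSem ρ fun q => candSem (θ q) τ := by
  induction ρ generalizing θ τ with
  | tvar p => rfl
  | boole => rfl
  | nat => rfl
  | list ρ ih => simp only [tsubst, candSem, ih]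
  | arr ρ σ ihρ ihσ => simp only [tsubst, candSem, ihρ, ihσ]
  | all p ρ ih =>
    simp only [tsubst, candSem]
    set z := freshVar ((ftv ρ \ {p}).biUnion fun q => ftv (θ q)) with hz
    have hfresh {q : ℕ} (hq : q ∈ ftv ρ) (hqp : q ≠ p) : z ∉ ftv (θ q) := fun hzq =>
      freshVar_notMem ((ftv ρ \ {p}).biUnion fun q => ftv (θ q)) <|
        Finset.mem_biUnion.2 ⟨q, by simp [hq, hqp], hzq⟩
    have (A : Set Value) :
        candSem (tsubst ρ (Function.update θ p (.tvar z))) (Function.update τ z A) =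
          candSem ρ (Function.update (fun q => candSem (θ q) τ) p A) := by
      rw [ih]
      refine candSem_congr fun q hq => ?_
      rcases eq_or_ne q p with rfl | hqp
      · simp [candSem]
      · simp only [Function.update_of_ne hqp]
        exact candSem_congr fun r hr =>
          Function.update_of_ne (ne_of_mem_of_not_mem hr (hfresh hq hqp)) _ _
    simp only [this]

theorem candSem_tsubst1 (ρ σ : FTy) (p : ℕ) (τ : ℕ → Set Value) :
    candSem (tsubst1 ρ p σ) τ = candSem ρ (Function.update τ p (candSem σ τ)) := by
  rw [tsubst1, candSem_tsubst]
  refine congrArg (candSem ρ) (funext fun q => ?_)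
  rcases eq_or_ne q p with rfl | hqp
  · simp
  · simp [hqp, candSem]

theorem succSet_mem_natCand {n : Value} (hn : n ∈ natCand) : succSet n ∈ natCand := by
  obtain ⟨i, hi⟩ := hn
  exact ⟨i + 1, hi.imp (pred_iterate_mono subset_pred_succSet ·)
    (pred_iterate_mono subset_pred_succSet ·)⟩

theorem consSet_mem_listCand {A : Set Value} {a s : Value} (ha : a ∈ A) (hne : a.Nonempty)
    (hs : s ∈ listCand A) : consSet a s ∈ listCand A := by
  have hhd : a ⊆ hd (consSet a s) := subset_hd_consSet ((isCandidate_listCand A).nonempty hs)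
  have htl : s ⊆ tl (consSet a s) := subset_tl_consSet hne
  obtain ⟨l, hl, hs⟩ := hs
  exact ⟨a :: l, List.forall_mem_cons.2 ⟨ha, hl⟩,
    hs.imp (fun hs => ⟨hhd, hs.mono htl⟩) fun hs => ⟨hhd, hs.mono htl⟩⟩

variable {C : Type} {R : Set (Rule FCO fArity C)} {Δ : C → FTy} {Γ : Ctx}
  {M : Tm FCO fArity C} {ρ : FTy}

theorem FTyd.den_mem_candSem
    (hΔ : ∀ c τ, (∀ p, IsCandidate (τ p)) → denCst R c ∈ candSem (Δ c) τ)
    (h : FTyd Δ Γ M ρ) {η : ℕ → Value} (hτ : ∀ p, IsCandidate (τ p))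
    (hη : ∀ x σ, Γ x = some σ → η x ∈ candSem σ τ) : den R η M ∈ candSem ρ τ := by
  induction h generalizing τ η with
  | var hx => exact den_var (R := R) η _ ▸ hη _ _ hx
  | cst c => exact den_cst (R := R) η c ▸ hΔ c τ hτ
  | @lam Γ x M ρ σ _ ih =>
    intro a ha
    refine (isCandidate_candSem σ hτ).mem_of_subset (ih (η := Function.update η x a) hτ ?_)
      (den_subset_den_lam_appSet ((isCandidate_candSem ρ hτ).nonempty ha) x M)
    intro y ρ' hy
    rcases eq_or_ne y x with rfl | hyx
    · obtain rfl : ρ = ρ' := by simpa using hy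
      simpa using ha
    · simpa [hyx] using hη y ρ' (by simpa [hyx] using hy)
  | app _ _ ihM ihN => exact den_app (R := R) η _ _ ▸ ihM hτ hη _ (ihN hτ hη)
  | @allI _ _ _ p _ hp ih =>
    intro A hA
    refine ih (isCandidate_update hτ hA p) fun x σ hx => ?_
    have : candSem σ (Function.update τ p A) = candSem σ τ :=
      candSem_congr fun q hq =>
        Function.update_of_ne (ne_of_mem_of_not_mem hq (hp x σ hx)) _ _
    exact this ▸ hη x σ hx
  | allE σ _ ih => exact candSem_tsubst1 .. ▸ ih hτ hη _ (isCandidate_candSem σ hτ)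
  | tt => exact .inl atom_tt_mem_den_tmT
  | ff => exact .inr (.inl atom_ff_mem_den_tmF)
  | zero => exact ⟨0, .inl atom_zero_mem_den_tmZero⟩
  | succ _ ih => exact den_tmSucc (R := R) _ ▸ succSet_mem_natCand (ih hτ hη)
  | nil =>
    exact ⟨[], fun _ ha => absurd ha List.not_mem_nil, .inl (den_tmNil ▸ atom_mem_conSet rfl _)⟩
  | cons _ _ ihM ihN =>
    exact den_tmCons (R := R) _ _ ▸
      consSet_mem_listCand (ihM hτ hη) ((isCandidate_candSem _ hτ).nonempty (ihM hτ hη))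
        (ihN hτ hη)

theorem FTyd.sn (hΔ : ∀ c τ, (∀ p, IsCandidate (τ p)) → denCst R c ∈ candSem (Δ c) τ)
    (h : FTyd Δ Γ M ρ) : SN R M := by
  have hbool (_ : ℕ) : IsCandidate boolCand := isCandidate_boolCand
  have hden : den R (fun _ => {.star}) M ∈ candSem ρ fun _ => boolCand :=
    h.den_mem_candSem hΔ hbool fun _ σ _ => (isCandidate_candSem σ hbool).mem_of_star_mem rfl
  obtain ⟨_, hσ⟩ := (isCandidate_candSem ρ hbool).nonempty hden
  exact hσ.sn

theorem mbr_mem_candSem (c : MC) (τ : ℕ → Set Value) : mbr c ∈ candSem (ΔMBR c) τ := by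
  cases c <;> simp only [ΔMBR, candSem, Function.update_self, Set.mem_ofPred_eq]
  case cif => exact fun A => mbr_if_mem
  case clt => exact mbr_lt_mem
  case clh => exact fun A _ => mbr_lh_mem
  case cget => exact fun A => mbr_get_mem
  case cat => exact fun A _ => mbr_cat_mem
  case crec => exact fun A => mbr_rec_mem
  case cphi => exact fun A hA y hy g hg s hs => BarArgs.mbr_phi_mem ⟨hA, hy, hg⟩ hs
  case cpsi =>
    exact fun A hA y hy g hg s hs k hk b hb => BarArgs.mbr_psi_mem ⟨hA, hy, hg⟩ hs hk hb

end Soundness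

theorem statement19_general {Γ : Ctx} {M : Tm FCO fArity MC} {ρ : FTy} (h : FTyd ΔMBR Γ M ρ) :
    SN MBR M :=
  h.sn fun c τ _ => mbr_mem_candSem c τ

/-- Strong normalisation for system F with modified bar
recursion: every closed term typeable in extended system F w.r.t. the type
assignment `Δ_MBR` is strongly normalising w.r.t. MBR (β-reduction together
with Gödel primitive recursion, the pattern-matching rules for
`if`, `<`, `lh`, `get`, `++`, and modified bar recursion). -/
theorem statement19 (M : Tm FCO fArity MC) (hM : FV M = ∅)
    (hty : ∃ ρ : FTy, ρ.Closed ∧ FTyd ΔMBR emptyCtx M ρ) :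
    SN MBR M := by
  obtain ⟨ρ, _, h⟩ := hty
  exact statement19_general h

end SNPaper
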